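/- Let ρ be an exchangeable probability measure on S^∞ with directing random measure p̃. If, for some p ≥ 1, p̂_n ∈ [S]_p for all n ∈ ℕ and p̃ ∈ [S]_p with ρ-probability 1, then for every m ∈ ℕ, with ρ-probability 1, d^{(p)}_{[[S]_p]}( q_m(ξ^(n)), p̂_n^∞ ∘ ẽ_{n,m}^{−1} ) ≤ d^{(p)}_{[[S]_p]}( π(ξ^(n)), δ_{p̂_n} ). -/

import Mathlib

open MeasureTheory ProbabilityTheory
open scoped ENNReal

noncomputable section

/-- The `p`-Wasserstein-type distance associated with a cost function `c`. -/
noncomputable def wassW {X : Type*} [MeasurableSpace X] (c : X → X → ℝ) (p : ℝ)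
    (μ ν : Measure X) : ℝ :=
  sInf {r : ℝ | ∃ γ : Measure (X × X), γ.map Prod.fst = μ ∧ γ.map Prod.snd = ν ∧
    r = (∫ z, c z.1 z.2 ^ p ∂γ) ^ (1 / p)}

/-- Membership in `[S]_p`: a Borel probability measure with finite `p`-th moment. -/
def MemWp {S : Type*} [MeasurableSpace S] [MetricSpace S] (p : ℝ) (𝔭 : Measure S) : Prop :=
  IsProbabilityMeasure 𝔭 ∧ ∃ x₀ : S, Integrable (fun x => dist x x₀ ^ p) 𝔭

/-- The empirical measure `ẽ_{n,m}(ω) = (1/m) Σ_{i=1}^m δ_{ω_{i+n}}`. -/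
noncomputable def empShift {S : Type*} [MeasurableSpace S] (n m : ℕ) (ω : ℕ → S) :
    Measure S :=
  (m : ℝ≥0∞)⁻¹ • ∑ i ∈ Finset.range m, Measure.dirac (ω (i + n))

/-!
Given the first `n` observations, the next `m` are i.i.d. with a law drawn from the posterior, so
`q_m(ξ^(n))` is the mixture over the posterior of the laws of the empirical measure of an
`m`-sample. An i.i.d. sample of a coupling `γ` of `μ` and `ν` couples the two empirical measures at
expected transport cost at most `∫ d^p dγ`. Integrating this over couplings of `μ` and `p̂_n` that
are optimal up to `ε` and depend measurably on `μ` bounds the left-hand side by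
`(∫ d^{(p)}(μ, p̂_n)^p π(dμ))^{1/p}`, the distance from the posterior to `δ_{p̂_n}`.
(If this integral diverges, both distances are `0`, by the convention for the Bochner integral.)

The measurable choice needs no selection theorem. Sorting points by the nearest of the first `N`
terms of a dense sequence reduces the coupling problem to a finite space. There the densities with
entries in `(k + 1)⁻¹ ℕ`, each completed to a coupling by a product term, approximate every
coupling, and from a countable near-optimal family one can choose measurably.
-/

/-- `γ` is a coupling of `μ` and `ν`, i.e. a transport plan between them. -/
structure IsCoupling {X Y : Type*} [MeasurableSpace X] [MeasurableSpace Y]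
    (γ : Measure (X × Y)) (μ : Measure X) (ν : Measure Y) : Prop where
  fst : γ.fst = μ
  snd : γ.snd = ν

namespace IsCoupling

variable {X Y : Type*} [MeasurableSpace X] [MeasurableSpace Y]
  {γ : Measure (X × Y)} {μ : Measure X} {ν : Measure Y}

lemma prod (μ : Measure X) (ν : Measure Y) [IsProbabilityMeasure μ] [IsProbabilityMeasure ν] :
    IsCoupling (μ.prod ν) μ ν :=
  ⟨Measure.fst_prod, Measure.snd_prod⟩

lemma isProbabilityMeasure [IsProbabilityMeasure μ] (h : IsCoupling γ μ ν) :
    IsProbabilityMeasure γ :=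
  ⟨by rw [← Measure.fst_univ, h.fst, measure_univ]⟩

lemma lintegral_fst (h : IsCoupling γ μ ν) {f : X → ℝ≥0∞} (hf : Measurable f) :
    ∫⁻ z, f z.1 ∂γ = ∫⁻ x, f x ∂μ := by
  rw [← h.fst, Measure.fst, lintegral_map hf measurable_fst]

lemma lintegral_snd (h : IsCoupling γ μ ν) {f : Y → ℝ≥0∞} (hf : Measurable f) :
    ∫⁻ z, f z.2 ∂γ = ∫⁻ y, f y ∂ν := by
  rw [← h.snd, Measure.snd, lintegral_map hf measurable_snd]

end IsCoupling

section Wasserstein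

variable {X : Type*} [MeasurableSpace X] {c : X → X → ℝ} {p : ℝ} {μ ν : Measure X}

lemma integral_cost_rpow_nonneg (hc : ∀ x y, 0 ≤ c x y) (γ : Measure (X × X)) :
    0 ≤ ∫ z, c z.1 z.2 ^ p ∂γ :=
  integral_nonneg fun z => Real.rpow_nonneg (hc z.1 z.2) p

lemma wassW_nonneg (hc : ∀ x y, 0 ≤ c x y) : 0 ≤ wassW c p μ ν := by
  refine Real.sInf_nonneg ?_
  rintro _ ⟨γ, -, -, rfl⟩
  exact Real.rpow_nonneg (integral_cost_rpow_nonneg hc γ) _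

lemma wassW_le (hc : ∀ x y, 0 ≤ c x y) {γ : Measure (X × X)} (hγ : IsCoupling γ μ ν) :
    wassW c p μ ν ≤ (∫ z, c z.1 z.2 ^ p ∂γ) ^ (1 / p) := by
  refine csInf_le ⟨0, ?_⟩ ⟨γ, hγ.fst, hγ.snd, rfl⟩
  rintro _ ⟨γ', -, -, rfl⟩
  exact Real.rpow_nonneg (integral_cost_rpow_nonneg hc γ') _

lemma wassW_rpow_le (hc : ∀ x y, 0 ≤ c x y) (hp : 0 < p) {γ : Measure (X × X)}
    (hγ : IsCoupling γ μ ν) : wassW c p μ ν ^ p ≤ ∫ z, c z.1 z.2 ^ p ∂γ := by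
  rw [← Real.le_rpow_inv_iff_of_pos (wassW_nonneg hc) (integral_cost_rpow_nonneg hc γ) hp,
    ← one_div]
  exact wassW_le hc hγ

lemma ofReal_wassW_rpow_le_lintegral (hc : ∀ x y, 0 ≤ c x y) (hp : 0 < p) {γ : Measure (X × X)}
    (hγ : IsCoupling γ μ ν) :
    ENNReal.ofReal (wassW c p μ ν ^ p) ≤ ∫⁻ z, ENNReal.ofReal (c z.1 z.2 ^ p) ∂γ := by
  have hcp (z : X × X) : 0 ≤ c z.1 z.2 ^ p := Real.rpow_nonneg (hc _ _) p
  refine (ENNReal.ofReal_le_ofReal (wassW_rpow_le hc hp hγ)).trans ?_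
  rw [← Real.enorm_of_nonneg (integral_nonneg hcp)]
  simpa only [Real.enorm_of_nonneg (hcp _)] using
    enorm_integral_le_lintegral_enorm (μ := γ) fun z => c z.1 z.2 ^ p

lemma wassW_dirac_right [IsProbabilityMeasure μ] {x : X} (hx : MeasurableSet {x})
    (hc : AEStronglyMeasurable (fun y => c y x ^ p) μ) :
    wassW c p μ (Measure.dirac x) = (∫ y, c y x ^ p ∂μ) ^ (1 / p) := by
  suffices h : ∀ γ, IsCoupling γ μ (Measure.dirac x) →
      ∫ z, c z.1 z.2 ^ p ∂γ = ∫ y, c y x ^ p ∂μ by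
    refine IsLeast.csInf_eq ⟨⟨_, (IsCoupling.prod μ (Measure.dirac x)).fst,
      (IsCoupling.prod μ (Measure.dirac x)).snd, ?_⟩, ?_⟩
    · rw [h _ (IsCoupling.prod μ _)]
    · rintro _ ⟨γ, hfst, hsnd, rfl⟩
      rw [h γ ⟨hfst, hsnd⟩]
  intro γ hγ
  have hsnd : ∀ᵐ z ∂γ, z.2 = x := by
    refine ae_of_ae_map (f := Prod.snd) (p := (· = x)) measurable_snd.aemeasurable ?_
    rw [← Measure.snd, hγ.snd]
    exact (ae_dirac_iff hx).2 rfl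
  rw [← hγ.fst] at hc ⊢
  rw [Measure.fst, integral_map measurable_fst.aemeasurable hc]
  exact integral_congr_ae (hsnd.mono fun z hz => by simp only [hz])

end Wasserstein

section TransportCost

variable {S : Type*} [PseudoMetricSpace S]

lemma two_rpow_sub_one_ne_zero (p : ℝ) : (2 : ℝ≥0∞) ^ (p - 1) ≠ 0 := by simp

lemma two_rpow_sub_one_ne_top {p : ℝ} (hp : 1 ≤ p) : (2 : ℝ≥0∞) ^ (p - 1) ≠ ∞ :=
  ENNReal.rpow_ne_top_of_nonneg (by linarith) (by simp)

lemma edist_rpow_eq_ofReal {p : ℝ} (hp : 0 ≤ p) (x y : S) :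
    edist x y ^ p = ENNReal.ofReal (dist x y ^ p) := by
  rw [edist_dist, ENNReal.ofReal_rpow_of_nonneg dist_nonneg hp]

lemma edist_rpow_le {p : ℝ} (hp : 1 ≤ p) (x y z : S) :
    edist x z ^ p ≤ 2 ^ (p - 1) * (edist x y ^ p + edist y z ^ p) :=
  (ENNReal.rpow_le_rpow (edist_triangle x y z) (zero_le_one.trans hp)).trans
    (ENNReal.rpow_add_le_mul_rpow_add_rpow _ _ hp)

variable [MeasurableSpace S]

/-- The `p`-cost `∫ d(x, y)^p dγ` of a transport plan `γ`. -/
def planCost (p : ℝ) (γ : Measure (S × S)) : ℝ≥0∞ := ∫⁻ z, edist z.1 z.2 ^ p ∂γ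

/-- The `p`-th power of the `p`-Wasserstein distance as an extended real, free of the junk values
that the Bochner integral brings into `wassW`. -/
def transportCost (p : ℝ) (μ ν : Measure S) : ℝ≥0∞ :=
  ⨅ (γ : Measure (S × S)) (_ : IsCoupling γ μ ν), planCost p γ

/-- The `p`-th moment of `μ` about `x₀`. -/
def pMoment (p : ℝ) (x₀ : S) (μ : Measure S) : ℝ≥0∞ := ∫⁻ x, edist x x₀ ^ p ∂μ

variable {p : ℝ} {μ ν : Measure S} {γ : Measure (S × S)}

lemma transportCost_le_planCost (hγ : IsCoupling γ μ ν) : transportCost p μ ν ≤ planCost p γ :=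
  iInf₂_le γ hγ

lemma pMoment_le_pMoment_add [IsProbabilityMeasure μ] (hp : 1 ≤ p) (x₀ x₁ : S) :
    pMoment p x₁ μ ≤ 2 ^ (p - 1) * (pMoment p x₀ μ + edist x₀ x₁ ^ p) :=
  calc pMoment p x₁ μ
      ≤ ∫⁻ x, 2 ^ (p - 1) * (edist x x₀ ^ p + edist x₀ x₁ ^ p) ∂μ :=
        lintegral_mono fun x => edist_rpow_le hp x x₀ x₁
    _ = 2 ^ (p - 1) * (pMoment p x₀ μ + edist x₀ x₁ ^ p) := by
        rw [lintegral_const_mul' _ _ (two_rpow_sub_one_ne_top hp),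
          lintegral_add_right _ (by fun_prop), lintegral_const, measure_univ, mul_one, pMoment]

lemma pMoment_lt_top_of_pMoment_lt_top [IsProbabilityMeasure μ] (hp : 1 ≤ p) {x₀ : S}
    (h : pMoment p x₀ μ < ∞) (x₁ : S) : pMoment p x₁ μ < ∞ := by
  refine (pMoment_le_pMoment_add hp x₀ x₁).trans_lt (ENNReal.mul_lt_top ?_ ?_)
  · exact (two_rpow_sub_one_ne_top hp).lt_top
  · exact ENNReal.add_lt_top.2 ⟨h, ENNReal.rpow_lt_top_of_nonneg (by linarith) (edist_ne_top _ _)⟩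

variable [OpensMeasurableSpace S]

lemma measurable_edist_rpow_const {Z : Type*} [MeasurableSpace Z] {f : Z → S} (hf : Measurable f)
    (p : ℝ) (x₀ : S) : Measurable fun z => edist (f z) x₀ ^ p :=
  (measurable_edist_left.comp hf).pow_const p

lemma measurable_pMoment (p : ℝ) (x₀ : S) : Measurable (pMoment p x₀) :=
  Measure.measurable_lintegral (measurable_edist_rpow_const measurable_id p x₀)

lemma IsCoupling.lintegral_edist_fst (hγ : IsCoupling γ μ ν) (p : ℝ) (x₀ : S) :
    ∫⁻ z, edist z.1 x₀ ^ p ∂γ = pMoment p x₀ μ :=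
  hγ.lintegral_fst (measurable_edist_rpow_const measurable_id p x₀)

lemma IsCoupling.lintegral_edist_snd (hγ : IsCoupling γ μ ν) (p : ℝ) (x₀ : S) :
    ∫⁻ z, edist z.2 x₀ ^ p ∂γ = pMoment p x₀ ν :=
  hγ.lintegral_snd (measurable_edist_rpow_const measurable_id p x₀)

lemma IsCoupling.planCost_le (hp : 1 ≤ p) (hγ : IsCoupling γ μ ν) (x₀ : S) :
    planCost p γ ≤ 2 ^ (p - 1) * (pMoment p x₀ μ + pMoment p x₀ ν) :=
  calc planCost p γ
      ≤ ∫⁻ z, 2 ^ (p - 1) * (edist z.1 x₀ ^ p + edist z.2 x₀ ^ p) ∂γ :=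
        lintegral_mono fun z => by simpa only [edist_comm x₀] using edist_rpow_le hp z.1 x₀ z.2
    _ = 2 ^ (p - 1) * (pMoment p x₀ μ + pMoment p x₀ ν) := by
        rw [lintegral_const_mul' _ _ (two_rpow_sub_one_ne_top hp),
          lintegral_add_left (measurable_edist_rpow_const measurable_fst p x₀),
          hγ.lintegral_edist_fst, hγ.lintegral_edist_snd]

lemma IsCoupling.pMoment_le (hp : 1 ≤ p) (hγ : IsCoupling γ μ ν) (x₀ : S) :
    pMoment p x₀ μ ≤ 2 ^ (p - 1) * (planCost p γ + pMoment p x₀ ν) :=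
  calc pMoment p x₀ μ
      ≤ ∫⁻ z, 2 ^ (p - 1) * (edist z.1 z.2 ^ p + edist z.2 x₀ ^ p) ∂γ := by
        rw [← hγ.lintegral_edist_fst]
        exact lintegral_mono fun z => edist_rpow_le hp z.1 z.2 x₀
    _ = 2 ^ (p - 1) * (planCost p γ + pMoment p x₀ ν) := by
        rw [lintegral_const_mul' _ _ (two_rpow_sub_one_ne_top hp),
          lintegral_add_right _ (measurable_edist_rpow_const measurable_snd p x₀),
          hγ.lintegral_edist_snd, planCost]

lemma transportCost_le (hp : 1 ≤ p) [IsProbabilityMeasure μ] [IsProbabilityMeasure ν] (x₀ : S) :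
    transportCost p μ ν ≤ 2 ^ (p - 1) * (pMoment p x₀ μ + pMoment p x₀ ν) :=
  (transportCost_le_planCost (.prod μ ν)).trans ((IsCoupling.prod μ ν).planCost_le hp x₀)

lemma pMoment_le_transportCost_add (hp : 1 ≤ p) (μ ν : Measure S) (x₀ : S) :
    pMoment p x₀ μ ≤ 2 ^ (p - 1) * (transportCost p μ ν + pMoment p x₀ ν) := by
  simp only [transportCost, ENNReal.iInf_add,
    ENNReal.mul_iInf_of_ne (two_rpow_sub_one_ne_zero p) (two_rpow_sub_one_ne_top hp)]
  exact le_iInf₂ fun γ hγ => hγ.pMoment_le hp x₀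

end TransportCost

section FiniteMoment

variable {S : Type*} [MetricSpace S] [MeasurableSpace S] [OpensMeasurableSpace S]
  {p : ℝ} {μ ν : Measure S}

lemma memWp_iff (hp : 1 ≤ p) (x₀ : S) :
    MemWp p μ ↔ IsProbabilityMeasure μ ∧ pMoment p x₀ μ < ∞ := by
  have hint (x : S) : Integrable (fun y => dist y x ^ p) μ ↔ pMoment p x μ < ∞ := by
    have hm : Measurable fun y => dist y x ^ p :=
      (continuous_id.dist continuous_const).measurable.pow_const p
    rw [Integrable, and_iff_right hm.aestronglyMeasurable, hasFiniteIntegral_iff_ofReal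
      (.of_forall fun y => Real.rpow_nonneg dist_nonneg p)]
    simp only [pMoment, edist_rpow_eq_ofReal (zero_le_one.trans hp)]
  refine and_congr_right fun _ => ?_
  simp only [hint]
  exact ⟨fun ⟨x, hx⟩ => pMoment_lt_top_of_pMoment_lt_top hp hx x₀, fun h => ⟨x₀, h⟩⟩

lemma MemWp.pMoment_lt_top (hp : 1 ≤ p) (h : MemWp p μ) (x₀ : S) : pMoment p x₀ μ < ∞ :=
  ((memWp_iff hp x₀).1 h).2

lemma IsCoupling.planCost_lt_top (hp : 1 ≤ p) {γ : Measure (S × S)} (hγ : IsCoupling γ μ ν)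
    (hμ : MemWp p μ) (hν : MemWp p ν) : planCost p γ < ∞ := by
  obtain ⟨x₀, -⟩ := hμ.2
  refine (hγ.planCost_le hp x₀).trans_lt (ENNReal.mul_lt_top ?_ ?_)
  · exact (two_rpow_sub_one_ne_top hp).lt_top
  · exact ENNReal.add_lt_top.2 ⟨hμ.pMoment_lt_top hp x₀, hν.pMoment_lt_top hp x₀⟩

lemma integral_dist_rpow_eq_toReal_planCost [SecondCountableTopology S] (hp : 0 ≤ p)
    (γ : Measure (S × S)) : ∫ z, dist z.1 z.2 ^ p ∂γ = (planCost p γ).toReal := by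
  have hm : Measurable fun z : S × S => dist z.1 z.2 ^ p := measurable_dist.pow_const p
  rw [integral_eq_lintegral_of_nonneg_ae (.of_forall fun z => Real.rpow_nonneg dist_nonneg p)
    hm.aestronglyMeasurable]
  simp only [planCost, edist_rpow_eq_ofReal hp]

lemma ofReal_wassW_dist_rpow [SecondCountableTopology S] (hp : 1 ≤ p) (hμ : MemWp p μ)
    (hν : MemWp p ν) :
    ENNReal.ofReal (wassW (fun u v => dist u v) p μ ν ^ p) = transportCost p μ ν := by
  have hp0 : 0 < p := zero_lt_one.trans_le hp
  have := hμ.1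
  have := hν.1
  have hprod := IsCoupling.prod μ ν
  refine le_antisymm (le_iInf₂ fun γ hγ => ?_) ?_
  · simpa only [planCost, edist_rpow_eq_ofReal hp0.le] using
      ofReal_wassW_rpow_le_lintegral (fun _ _ => dist_nonneg) hp0 hγ
  have hfin : transportCost p μ ν ≠ ∞ :=
    ((transportCost_le_planCost hprod).trans_lt (hprod.planCost_lt_top hp hμ hν)).ne
  refine (ENNReal.le_ofReal_iff_toReal_le hfin ?_).2 ?_
  · exact Real.rpow_nonneg (wassW_nonneg fun _ _ => dist_nonneg) p
  rw [← Real.rpow_inv_le_iff_of_pos ENNReal.toReal_nonneg (wassW_nonneg fun _ _ => dist_nonneg) hp0,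
    ← one_div]
  refine le_csInf ⟨_, _, hprod.fst, hprod.snd, rfl⟩ ?_
  rintro _ ⟨γ, hfst, hsnd, rfl⟩
  have hγ : IsCoupling γ μ ν := ⟨hfst, hsnd⟩
  rw [integral_dist_rpow_eq_toReal_planCost hp0.le]
  gcongr
  · exact (hγ.planCost_lt_top hp hμ hν).ne
  · exact transportCost_le_planCost hγ

lemma measurableSet_isProbabilityMeasure {X : Type*} [MeasurableSpace X] :
    MeasurableSet {μ : Measure X | IsProbabilityMeasure μ} := by
  simp only [isProbabilityMeasure_iff]
  exact Measure.measurable_coe .univ (measurableSet_singleton 1)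

lemma measurableSet_memWp (hp : 1 ≤ p) : MeasurableSet {μ : Measure S | MemWp p μ} := by
  rcases isEmpty_or_nonempty S with hS | ⟨⟨x₀⟩⟩
  · convert MeasurableSet.empty
    exact Set.eq_empty_of_forall_notMem fun μ hμ => hS.elim hμ.2.choose
  · simp only [memWp_iff hp x₀]
    exact measurableSet_isProbabilityMeasure.inter (measurable_pMoment p x₀ measurableSet_Iio)

end FiniteMoment

section CompleteDensity

variable {X Y : Type*} [MeasurableSpace X] [MeasurableSpace Y]

lemma isCoupling_withDensity {μ : Measure X} {ν : Measure Y} [SFinite μ] [SFinite ν]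
    {w : X × Y → ℝ≥0∞} (hw : Measurable w) (hfst : ∀ᵐ x ∂μ, ∫⁻ y, w (x, y) ∂ν = 1)
    (hsnd : ∀ᵐ y ∂ν, ∫⁻ x, w (x, y) ∂μ = 1) : IsCoupling ((μ.prod ν).withDensity w) μ ν := by
  constructor
  · ext A hA
    rw [Measure.fst_apply hA, ← Set.prod_univ, withDensity_apply _ (hA.prod .univ),
      setLIntegral_prod _ hw.aemeasurable]
    simp only [Measure.restrict_univ]
    rw [setLIntegral_congr_fun_ae hA (hfst.mono fun x hx _ => hx), setLIntegral_one]
  · ext B hB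
    rw [Measure.snd_apply hB, ← Set.univ_prod, withDensity_apply _ (.prod .univ hB),
      setLIntegral_prod_symm _ hw.aemeasurable]
    simp only [Measure.restrict_univ]
    rw [setLIntegral_congr_fun_ae hB (hsnd.mono fun x hx _ => hx), setLIntegral_one]

/-- `h` is a density, with respect to `μ ⊗ ν`, of a measure whose marginals are at most `μ`
and `ν`. -/
structure IsSubcouplingDensity (μ : Measure X) (ν : Measure Y) (h : X × Y → ℝ≥0∞) : Prop where
  measurable : Measurable h
  lintegral_fst_le : ∀ x, ∫⁻ y, h (x, y) ∂ν ≤ 1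
  lintegral_snd_le : ∀ y, ∫⁻ x, h (x, y) ∂μ ≤ 1

/-- Adds to the sub-coupling with density `h` the normalised product of what is missing from its
two marginals, which makes it a coupling. -/
def completeDensity (μ : Measure X) (ν : Measure Y) (h : X × Y → ℝ≥0∞) (z : X × Y) : ℝ≥0∞ :=
  h z + (1 - ∫⁻ z, h z ∂μ.prod ν)⁻¹ *
    ((1 - ∫⁻ y, h (z.1, y) ∂ν) * (1 - ∫⁻ x, h (x, z.2) ∂μ))

lemma le_completeDensity (μ : Measure X) (ν : Measure Y) (h : X × Y → ℝ≥0∞) (z : X × Y) :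
    h z ≤ completeDensity μ ν h z :=
  self_le_add_right _ _

lemma completeDensity_swap (μ : Measure X) (ν : Measure Y) [SFinite μ] [SFinite ν]
    (h : X × Y → ℝ≥0∞) (z : X × Y) :
    completeDensity ν μ (h ∘ Prod.swap) z.swap = completeDensity μ ν h z := by
  simp only [completeDensity, Function.comp_apply, Prod.swap_swap, Prod.fst_swap, Prod.snd_swap,
    lintegral_prod_swap, Prod.swap_prod_mk, mul_comm (1 - ∫⁻ y, h (z.1, y) ∂ν)]

namespace IsSubcouplingDensity

variable {μ : Measure X} {ν : Measure Y} {h : X × Y → ℝ≥0∞}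

lemma swap (hh : IsSubcouplingDensity μ ν h) : IsSubcouplingDensity ν μ (h ∘ Prod.swap) :=
  ⟨hh.measurable.comp measurable_swap, hh.lintegral_snd_le, hh.lintegral_fst_le⟩

variable [IsProbabilityMeasure μ] [IsProbabilityMeasure ν]

lemma lintegral_one_sub (hh : IsSubcouplingDensity μ ν h) :
    ∫⁻ x, (1 - ∫⁻ y, h (x, y) ∂ν) ∂μ = 1 - ∫⁻ z, h z ∂μ.prod ν := by
  have hm : Measurable fun x => ∫⁻ y, h (x, y) ∂ν := hh.measurable.lintegral_prod_right'
  have hle : ∫⁻ x, ∫⁻ y, h (x, y) ∂ν ∂μ ≤ 1 := by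
    simpa using lintegral_mono (μ := μ) hh.lintegral_fst_le
  rw [lintegral_sub hm (hle.trans_lt ENNReal.one_lt_top).ne (.of_forall hh.lintegral_fst_le),
    lintegral_one, measure_univ, lintegral_prod _ hh.measurable.aemeasurable]

lemma lintegral_le_one (hh : IsSubcouplingDensity μ ν h) : ∫⁻ z, h z ∂μ.prod ν ≤ 1 := by
  rw [lintegral_prod _ hh.measurable.aemeasurable]
  simpa using lintegral_mono (μ := μ) hh.lintegral_fst_le

lemma measurable_completeDensity (hh : IsSubcouplingDensity μ ν h) :
    Measurable (completeDensity μ ν h) := by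
  have := hh.measurable
  have : Measurable fun x => ∫⁻ y, h (x, y) ∂ν := hh.measurable.lintegral_prod_right'
  have : Measurable fun y => ∫⁻ x, h (x, y) ∂μ := hh.measurable.lintegral_prod_left'
  unfold completeDensity
  fun_prop

lemma lintegral_completeDensity_right (hh : IsSubcouplingDensity μ ν h) :
    ∀ᵐ x ∂μ, ∫⁻ y, completeDensity μ ν h (x, y) ∂ν = 1 := by
  have hm : Measurable fun y => ∫⁻ x, h (x, y) ∂μ := hh.measurable.lintegral_prod_left'
  set r := 1 - ∫⁻ z, h z ∂μ.prod ν with hr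
  have hsnd : ∫⁻ y, (1 - ∫⁻ x, h (x, y) ∂μ) ∂ν = r := by
    simpa only [Function.comp_apply, Prod.swap_prod_mk, lintegral_prod_swap] using
      hh.swap.lintegral_one_sub
  have hae : r = 0 → ∀ᵐ x ∂μ, 1 - ∫⁻ y, h (x, y) ∂ν = 0 := by
    intro h0
    rw [hr, ← hh.lintegral_one_sub, lintegral_eq_zero_iff] at h0
    · exact h0
    · exact hh.measurable.lintegral_prod_right'.const_sub 1
  have hx (x : X) : ∫⁻ y, completeDensity μ ν h (x, y) ∂ν =
      ∫⁻ y, h (x, y) ∂ν + r⁻¹ * ((1 - ∫⁻ y, h (x, y) ∂ν) * r) := by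
    have hmx : Measurable fun y => h (x, y) := hh.measurable.comp measurable_prodMk_left
    simp only [completeDensity]
    rw [lintegral_add_left hmx,
      lintegral_const_mul _ (by fun_prop), lintegral_const_mul _ (by fun_prop), hsnd]
  simp only [hx]
  rcases eq_or_ne r 0 with h0 | h0
  · filter_upwards [hae h0] with x hx
    rw [hx]
    simpa using (hh.lintegral_fst_le x).antisymm (tsub_eq_zero_iff_le.1 hx)
  · refine .of_forall fun x => ?_
    rw [mul_left_comm, ENNReal.inv_mul_cancel h0 (by simp [hr]), mul_one,
      add_tsub_cancel_of_le (hh.lintegral_fst_le x)]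

lemma isCoupling (hh : IsSubcouplingDensity μ ν h) :
    IsCoupling ((μ.prod ν).withDensity (completeDensity μ ν h)) μ ν := by
  refine isCoupling_withDensity hh.measurable_completeDensity hh.lintegral_completeDensity_right ?_
  filter_upwards [hh.swap.lintegral_completeDensity_right] with y hy
  simpa only [← completeDensity_swap μ ν h, Prod.swap_prod_mk] using hy

lemma lintegral_mul_completeDensity_le (hh : IsSubcouplingDensity μ ν h) {c : X × Y → ℝ≥0∞}
    {C : ℝ≥0∞} (hc : ∀ z, c z ≤ C) :
    ∫⁻ z, c z * completeDensity μ ν h z ∂μ.prod ν ≤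
      ∫⁻ z, c z * h z ∂μ.prod ν + C * (1 - ∫⁻ z, h z ∂μ.prod ν) := by
  set r := 1 - ∫⁻ z, h z ∂μ.prod ν
  have hm : Measurable fun z => completeDensity μ ν h z - h z :=
    hh.measurable_completeDensity.sub hh.measurable
  have hmass : ∫⁻ z, completeDensity μ ν h z ∂μ.prod ν = 1 := by
    have := hh.isCoupling.isProbabilityMeasure
    rw [← setLIntegral_univ, ← withDensity_apply _ .univ, measure_univ]
  calc ∫⁻ z, c z * completeDensity μ ν h z ∂μ.prod ν
      ≤ ∫⁻ z, (c z * h z + C * (completeDensity μ ν h z - h z)) ∂μ.prod ν := by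
        refine lintegral_mono fun z => ?_
        nth_rw 1 [← add_tsub_cancel_of_le (le_completeDensity μ ν h z), mul_add]
        gcongr
        exact hc z
    _ = ∫⁻ z, c z * h z ∂μ.prod ν + C * r := by
        rw [lintegral_add_right _ (hm.const_mul C), lintegral_const_mul _ hm,
          lintegral_sub hh.measurable (hh.lintegral_le_one.trans_lt ENNReal.one_lt_top).ne
            (.of_forall (le_completeDensity μ ν h)), hmass]

end IsSubcouplingDensity

end CompleteDensity

section GridDensity

lemma exists_nat_div_le {Z : Type*} {g : Z → ℝ≥0∞} (hg : ∀ z, g z ≠ ∞) (k : ℕ) : ∃ n : Z → ℕ,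
    ∀ z, (n z : ℝ≥0∞) / (k + 1) ≤ g z ∧ g z ≤ (n z : ℝ≥0∞) / (k + 1) + (k + 1 : ℝ≥0∞)⁻¹ := by
  lift g to Z → NNReal using hg
  refine ⟨fun z => ⌊g z * (k + 1)⌋₊, fun z => ⟨?_, ?_⟩⟩
  · refine ENNReal.div_le_of_le_mul ?_
    dsimp only
    exact_mod_cast Nat.floor_le (zero_le (a := g z * (k + 1)))
  · rw [← one_div, ENNReal.div_add_div_same, ENNReal.le_div_iff_mul_le (by simp) (by simp)]
    dsimp only
    exact_mod_cast (Nat.lt_floor_add_one (g z * (k + 1))).le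

variable {X Y : Type*} [MeasurableSpace X] [MeasurableSpace Y]

lemma measurable_measure_prod_left (ν : Measure Y) [SFinite ν] :
    Measurable fun μ : Measure X => μ.prod ν := by
  simp only [Measure.prod_def]
  exact Measure.measurable_bind' Measurable.map_prodMk_left

open Classical in
/-- A countable family of coupling densities between measures on finite spaces: the completion of
the density `n / (k + 1)` wherever that is a sub-coupling, and the product density elsewhere. -/
def gridDensity (k : ℕ) (n : X × Y → ℕ) (μ : Measure X) (ν : Measure Y) : X × Y → ℝ≥0∞ :=
  if IsSubcouplingDensity μ ν (fun z => (n z : ℝ≥0∞) / (k + 1)) then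
    completeDensity μ ν fun z => (n z : ℝ≥0∞) / (k + 1)
  else 1

variable {μ : Measure X} {ν : Measure Y}

lemma measurable_gridDensity [MeasurableSingletonClass X] [MeasurableSingletonClass Y] [Finite X]
    [Finite Y] [IsProbabilityMeasure ν] (k : ℕ) (n : X × Y → ℕ) (z : X × Y) :
    Measurable fun μ : Measure X => gridDensity k n μ ν z := by
  set h : X × Y → ℝ≥0∞ := fun z => (n z : ℝ≥0∞) / (k + 1)
  have hprod : Measurable fun μ : Measure X => ∫⁻ z, h z ∂μ.prod ν :=
    (Measure.measurable_lintegral (by fun_prop)).comp (measurable_measure_prod_left ν)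
  have hsnd (y : Y) : Measurable fun μ : Measure X => ∫⁻ x, h (x, y) ∂μ :=
    Measure.measurable_lintegral (by fun_prop)
  have hset : MeasurableSet {μ : Measure X | IsSubcouplingDensity μ ν h} := by
    have hiff (μ : Measure X) : IsSubcouplingDensity μ ν h ↔
        (∀ x, ∫⁻ y, h (x, y) ∂ν ≤ 1) ∧ ∀ y, ∫⁻ x, h (x, y) ∂μ ≤ 1 :=
      ⟨fun hh => ⟨hh.2, hh.3⟩, fun hh => ⟨measurable_of_finite h, hh.1, hh.2⟩⟩
    simp only [hiff, Set.ofPred_and, Set.ofPred_forall]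
    exact .inter (.iInter fun _ => .const _) (.iInter fun y => hsnd y measurableSet_Iic)
  simp only [gridDensity, apply_ite (fun f : X × Y → ℝ≥0∞ => f z)]
  refine Measurable.ite hset ?_ measurable_const
  have := hsnd z.2
  unfold completeDensity
  fun_prop

/-- The density of a coupling `G` of measures on finite spaces with respect to the product measure.
Where the product measure vanishes, so does `G`, and the density is `0 / 0 = 0`. -/
def couplingDensity (G : Measure (X × Y)) (z : X × Y) : ℝ≥0∞ :=
  G {z} / (G.fst {z.1} * G.snd {z.2})

lemma measure_singleton_eq_zero_of_mul_eq_zero {G : Measure (X × Y)} {z : X × Y}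
    (h : G.fst {z.1} * G.snd {z.2} = 0) : G {z} = 0 := by
  rcases mul_eq_zero.1 h with h | h
  · exact le_zero_iff.1 (h ▸ (measure_mono (by simp)).trans
      (Measure.le_map_apply measurable_fst.aemeasurable {z.1}))
  · exact le_zero_iff.1 (h ▸ (measure_mono (by simp)).trans
      (Measure.le_map_apply measurable_snd.aemeasurable {z.2}))

section FiniteMeasure

variable (G : Measure (X × Y)) [IsFiniteMeasure G]

lemma couplingDensity_mul (z : X × Y) :
    couplingDensity G z * (G.fst {z.1} * G.snd {z.2}) = G {z} :=
  ENNReal.div_mul_cancel' measure_singleton_eq_zero_of_mul_eq_zero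
    fun h => absurd h (by finiteness)

lemma couplingDensity_ne_top (z : X × Y) : couplingDensity G z ≠ ∞ := fun h => by
  rcases ENNReal.div_eq_top.1 h with ⟨h0, h⟩ | ⟨h, -⟩
  · exact h0 (measure_singleton_eq_zero_of_mul_eq_zero h)
  · exact measure_ne_top G {z} h

end FiniteMeasure

variable [MeasurableSingletonClass X] [MeasurableSingletonClass Y]

lemma couplingDensity_swap (G : Measure (X × Y)) (z : X × Y) :
    couplingDensity (G.map Prod.swap) z.swap = couplingDensity G z := by
  rw [couplingDensity, couplingDensity, Measure.fst_map_swap, Measure.snd_map_swap,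
    Measure.map_apply measurable_swap (measurableSet_singleton _), Prod.fst_swap, Prod.snd_swap,
    mul_comm, ← Set.image_swap_eq_preimage_swap, Set.image_singleton, Prod.swap_swap]

lemma sum_measure_singleton_fst [Fintype Y] (G : Measure (X × Y)) (x : X) :
    ∑ y, G {(x, y)} = G.fst {x} := by
  have hset : Prod.fst ⁻¹' {x} = ((Finset.univ.map ⟨Prod.mk x, Prod.mk_right_injective x⟩ :
      Finset (X × Y)) : Set (X × Y)) := by
    ext z
    simp [Prod.ext_iff, eq_comm]
  rw [Measure.fst_apply (measurableSet_singleton _), hset, ← sum_measure_singleton, Finset.sum_map]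
  rfl

variable (G : Measure (X × Y)) [IsFiniteMeasure G]

lemma lintegral_couplingDensity_right_le [Finite Y] (x : X) :
    ∫⁻ y, couplingDensity G (x, y) ∂G.snd ≤ 1 := by
  have := Fintype.ofFinite Y
  rw [lintegral_fintype]
  calc ∑ y, couplingDensity G (x, y) * G.snd {y}
      ≤ ∑ y, G {(x, y)} / G.fst {x} := by
        refine Finset.sum_le_sum fun y _ => ?_
        rw [couplingDensity, div_eq_mul_inv, ENNReal.mul_inv (by simp) (by simp), div_eq_mul_inv,
          mul_assoc, mul_assoc]
        exact mul_le_mul_right (mul_le_of_le_one_right' (ENNReal.inv_mul_le_one _)) _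
    _ = G.fst {x} / G.fst {x} := by
        simp only [div_eq_mul_inv, ← Finset.sum_mul, sum_measure_singleton_fst]
    _ ≤ 1 := ENNReal.div_self_le_one

lemma isSubcouplingDensity_of_le [Finite X] [Finite Y] {h : X × Y → ℝ≥0∞}
    (hh : ∀ z, h z ≤ couplingDensity G z) :
    IsSubcouplingDensity G.fst G.snd h where
  measurable := measurable_of_finite h
  lintegral_fst_le x :=
    (lintegral_mono fun y => hh (x, y)).trans (lintegral_couplingDensity_right_le G x)
  lintegral_snd_le y := by
    refine (lintegral_mono fun x =>
      (hh (x, y)).trans_eq (couplingDensity_swap G (x, y)).symm).trans ?_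
    simpa only [Measure.snd_map_swap, Prod.swap_prod_mk] using
      lintegral_couplingDensity_right_le (G.map Prod.swap) y

lemma lintegral_mul_couplingDensity [Finite X] [Finite Y] (c : X × Y → ℝ≥0∞) :
    ∫⁻ z, c z * couplingDensity G z ∂G.fst.prod G.snd = ∫⁻ z, c z ∂G := by
  have := Fintype.ofFinite X
  have := Fintype.ofFinite Y
  rw [lintegral_fintype, lintegral_fintype]
  refine Finset.sum_congr rfl fun z _ => ?_
  rw [← Set.singleton_prod_singleton, Measure.prod_prod, mul_assoc, couplingDensity_mul,
    Set.singleton_prod_singleton]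

lemma exists_lintegral_mul_gridDensity_le [Finite X] [Finite Y] [IsProbabilityMeasure μ]
    [IsProbabilityMeasure ν] {G : Measure (X × Y)} (hG : IsCoupling G μ ν)
    {c : X × Y → ℝ≥0∞} {C : ℝ≥0∞} (hC : C ≠ ∞) (hc : ∀ z, c z ≤ C) {ε : ℝ≥0∞} (hε : ε ≠ 0) :
    ∃ k n, ∫⁻ z, c z * gridDensity k n μ ν z ∂μ.prod ν ≤ ∫⁻ z, c z ∂G + ε := by
  have := hG.isProbabilityMeasure
  obtain ⟨k, hk⟩ : ∃ k : ℕ, C / ε < k := ENNReal.exists_nat_gt (ENNReal.div_ne_top hC hε)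
  obtain ⟨n, hn⟩ := exists_nat_div_le (couplingDensity_ne_top G) k
  set h : X × Y → ℝ≥0∞ := fun z => (n z : ℝ≥0∞) / (k + 1)
  have hh : IsSubcouplingDensity μ ν h := by
    simpa only [hG.fst, hG.snd] using isSubcouplingDensity_of_le G fun z => (hn z).1
  have hmass : 1 ≤ ∫⁻ z, h z ∂μ.prod ν + (k + 1 : ℝ≥0∞)⁻¹ := by
    have hg := lintegral_mul_couplingDensity G 1
    simp only [Pi.one_apply, one_mul, lintegral_one, measure_univ, hG.fst, hG.snd] at hg
    calc 1 ≤ ∫⁻ z, (h z + (k + 1 : ℝ≥0∞)⁻¹) ∂μ.prod ν :=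
          hg.symm.trans_le (lintegral_mono fun z => (hn z).2)
      _ = ∫⁻ z, h z ∂μ.prod ν + (k + 1 : ℝ≥0∞)⁻¹ := by
          rw [lintegral_add_right _ measurable_const, lintegral_const, measure_univ, mul_one]
  refine ⟨k, n, ?_⟩
  rw [gridDensity, if_pos hh]
  refine (hh.lintegral_mul_completeDensity_le hc).trans (add_le_add ?_ ?_)
  · rw [← lintegral_mul_couplingDensity G, hG.fst, hG.snd]
    gcongr with z
    exact (hn z).1
  · calc C * (1 - ∫⁻ z, h z ∂μ.prod ν) ≤ C * (k + 1 : ℝ≥0∞)⁻¹ := by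
          gcongr
          exact tsub_le_iff_left.2 hmass
      _ ≤ ε := by
          have hCk := (ENNReal.div_le_iff_le_mul (.inl hε) (.inr hk.ne_bot)).1 hk.le
          exact ENNReal.div_le_of_le_mul' (hCk.trans (mul_le_mul_left le_self_add ε))

end GridDensity

section CellCoupling

variable {X Y ι κ : Type*} [MeasurableSpace X] [MeasurableSpace Y] [MeasurableSpace ι]
  [MeasurableSpace κ] {T : X → ι} {U : Y → κ} {μ : Measure X} {ν : Measure Y}

lemma lintegral_map_prod_map [SFinite μ] [SFinite ν] (hT : Measurable T) (hU : Measurable U)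
    {f : ι × κ → ℝ≥0∞} (hf : Measurable f) :
    ∫⁻ z, f z ∂(μ.map T).prod (ν.map U) = ∫⁻ z, f (Prod.map T U z) ∂μ.prod ν := by
  rw [Measure.map_prod_map _ _ hT hU, lintegral_map hf (hT.prodMap hU)]

lemma IsSubcouplingDensity.comp_prodMap (hT : Measurable T) (hU : Measurable U)
    {h : ι × κ → ℝ≥0∞} (hh : IsSubcouplingDensity (μ.map T) (ν.map U) h) :
    IsSubcouplingDensity μ ν (h ∘ Prod.map T U) where
  measurable := hh.measurable.comp (hT.prodMap hU)
  lintegral_fst_le x := by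
    have hm : Measurable fun y => h (T x, y) := hh.measurable.comp measurable_prodMk_left
    simpa only [Function.comp_apply, Prod.map_apply, lintegral_map hm hU] using
      hh.lintegral_fst_le (T x)
  lintegral_snd_le y := by
    have hm : Measurable fun x => h (x, U y) := hh.measurable.comp measurable_prodMk_right
    simpa only [Function.comp_apply, Prod.map_apply, lintegral_map hm hT] using
      hh.lintegral_snd_le (U y)

lemma completeDensity_comp_prodMap [SFinite μ] [SFinite ν] (hT : Measurable T) (hU : Measurable U)
    {h : ι × κ → ℝ≥0∞} (hh : Measurable h) :
    completeDensity (μ.map T) (ν.map U) h ∘ Prod.map T U =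
      completeDensity μ ν (h ∘ Prod.map T U) := by
  ext z
  have hfst : Measurable fun y => h (T z.1, y) := hh.comp measurable_prodMk_left
  have hsnd : Measurable fun x => h (x, U z.2) := hh.comp measurable_prodMk_right
  simp only [completeDensity, Function.comp_apply, Prod.map_fst, Prod.map_snd, Prod.map_apply,
    lintegral_map_prod_map hT hU hh, lintegral_map hfst hU, lintegral_map hsnd hT]

/-- The coupling of `μ` and `ν` whose density is constant on the cells `T⁻¹{i} × U⁻¹{j}`, with
values given by the grid density between the images `μ.map T` and `ν.map U`. -/
def cellCoupling (T : X → ι) (U : Y → κ) (k : ℕ) (n : ι × κ → ℕ) (ν : Measure Y)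
    (μ : Measure X) : Measure (X × Y) :=
  (μ.prod ν).withDensity (gridDensity k n (μ.map T) (ν.map U) ∘ Prod.map T U)

lemma isCoupling_cellCoupling [IsProbabilityMeasure μ] [IsProbabilityMeasure ν]
    (hT : Measurable T) (hU : Measurable U) (k : ℕ) (n : ι × κ → ℕ) :
    IsCoupling (cellCoupling T U k n ν μ) μ ν := by
  unfold cellCoupling gridDensity
  split_ifs with h
  · rw [completeDensity_comp_prodMap hT hU h.measurable]
    exact (h.comp_prodMap hT hU).isCoupling
  · rw [Pi.one_comp, withDensity_one]
    exact .prod μ ν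

variable [MeasurableSingletonClass ι] [MeasurableSingletonClass κ] [Finite ι] [Finite κ]

lemma lintegral_cellCoupling [SFinite μ] [SFinite ν] (hT : Measurable T) (hU : Measurable U)
    (k : ℕ) (n : ι × κ → ℕ) (c : ι × κ → ℝ≥0∞) :
    ∫⁻ z, c (Prod.map T U z) ∂cellCoupling T U k n ν μ =
      ∫⁻ z, c z * gridDensity k n (μ.map T) (ν.map U) z ∂(μ.map T).prod (ν.map U) := by
  have hTU := hT.prodMap hU
  have hc : Measurable fun z => c (Prod.map T U z) := (measurable_of_finite c).comp hTU
  rw [lintegral_map_prod_map hT hU (measurable_of_finite _), cellCoupling,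
    lintegral_withDensity_eq_lintegral_mul _ ((measurable_of_finite _).comp hTU) hc]
  simp only [Pi.mul_apply, Function.comp_apply, mul_comm]

lemma measurable_cellCoupling [IsProbabilityMeasure ν] (hT : Measurable T) (hU : Measurable U)
    (k : ℕ) (n : ι × κ → ℕ) : Measurable (cellCoupling T U k n ν) := by
  have := Fintype.ofFinite ι
  have := Fintype.ofFinite κ
  have := Measure.isProbabilityMeasure_map (μ := ν) hU.aemeasurable
  refine Measure.measurable_of_measurable_coe _ fun E hE => ?_
  have hcell (z : ι × κ) : MeasurableSet (Prod.map T U ⁻¹' {z} ∩ E) :=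
    (hT.prodMap hU (measurableSet_singleton z)).inter hE
  have happly (μ : Measure X) : cellCoupling T U k n ν μ E =
      ∑ z, gridDensity k n (μ.map T) (ν.map U) z * μ.prod ν (Prod.map T U ⁻¹' {z} ∩ E) := by
    simp only [cellCoupling, withDensity_apply _ hE, Function.comp_apply]
    rw [← lintegral_map (measurable_of_finite _) (hT.prodMap hU), lintegral_fintype]
    refine Finset.sum_congr rfl fun z _ => ?_
    rw [Measure.map_apply (hT.prodMap hU) (measurableSet_singleton z),
      Measure.restrict_apply (hT.prodMap hU (measurableSet_singleton z))]
  simp only [happly]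
  refine Finset.measurable_fun_sum _ fun z _ => .mul ?_ ?_
  · exact (measurable_gridDensity k n z).comp (Measure.measurable_map T hT)
  · exact (Measure.measurable_coe (hcell z)).comp (measurable_measure_prod_left ν)

end CellCoupling

section MeasurableSelection

variable {p : ℝ}

lemma exists_measurable_le_iInf_add {Z W : Type*} [MeasurableSpace Z] [MeasurableSpace W]
    {κ : ℕ → Z → W} (hκ : ∀ k, Measurable (κ k)) {F : W → ℝ≥0∞} (hF : Measurable F) {ε : ℝ≥0∞}
    (hε : ε ≠ 0) :
    ∃ g : Z → W, Measurable g ∧ (∀ z, ∃ k, g z = κ k z) ∧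
      ∀ z, F (g z) ≤ (⨅ k, F (κ k z)) + ε := by
  classical
  have hinf : Measurable fun z => (⨅ k, F (κ k z)) + ε :=
    (Measurable.iInf fun k => hF.comp (hκ k)).add_const ε
  have hex (z : Z) : ∃ k, F (κ k z) ≤ (⨅ k, F (κ k z)) + ε := by
    rcases eq_or_ne (⨅ k, F (κ k z)) ∞ with h | h
    · simp [h]
    · obtain ⟨k, hk⟩ := iInf_lt_iff.1 (ENNReal.lt_add_right h hε)
      exact ⟨k, hk.le⟩
  exact ⟨fun z => κ (Nat.find (hex z)) z,
    .find hκ (fun k => measurableSet_le (hF.comp (hκ k)) hinf) hex,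
    fun z => ⟨_, rfl⟩, fun z => Nat.find_spec (hex z)⟩

lemma lintegral_rpow_add_add_le {Z : Type*} [MeasurableSpace Z] (hp : 1 ≤ p) (γ : Measure Z)
    {f g h : Z → ℝ≥0∞} (hf : Measurable f) (hg : Measurable g) (hh : Measurable h) :
    (∫⁻ z, (f z + g z + h z) ^ p ∂γ) ^ (1 / p) ≤
      (∫⁻ z, f z ^ p ∂γ) ^ (1 / p) + (∫⁻ z, g z ^ p ∂γ) ^ (1 / p) +
        (∫⁻ z, h z ^ p ∂γ) ^ (1 / p) :=
  (ENNReal.lintegral_Lp_add_le (hf.add hg).aemeasurable hh.aemeasurable hp).trans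
    (add_le_add_left (ENNReal.lintegral_Lp_add_le hf.aemeasurable hg.aemeasurable hp) _)

lemma exists_comp_eq_nearestPt {S : Type*} [PseudoEMetricSpace S] [MeasurableSpace S]
    [OpensMeasurableSpace S] (x : ℕ → S) (N : ℕ) : ∃ T : S → Fin (N + 1),
    Measurable T ∧ (fun i : Fin (N + 1) => x i) ∘ T = SimpleFunc.nearestPt x N := by
  have hle (y : S) : SimpleFunc.nearestPtInd x N y < N + 1 :=
    Nat.lt_succ_of_le (SimpleFunc.nearestPtInd_le x N y)
  refine ⟨fun y => ⟨SimpleFunc.nearestPtInd x N y, hle y⟩, ?_, rfl⟩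
  exact measurable_to_countable' fun i => by
    simpa only [Set.preimage, Set.mem_singleton_iff, Fin.ext_iff] using
      (SimpleFunc.nearestPtInd x N).measurable (measurableSet_singleton (i : ℕ))

variable {S : Type*} [PseudoMetricSpace S] [MeasurableSpace S] {μ ν : Measure S}

/-- The `L^p(μ)` error made by replacing each point `x` by `τ x`. -/
def quantizationError (p : ℝ) (τ : S → S) (μ : Measure S) : ℝ≥0∞ :=
  (∫⁻ x, edist x (τ x) ^ p ∂μ) ^ (1 / p)

variable [OpensMeasurableSpace S] [SecondCountableTopology S] {τ : S → S}

lemma measurable_planCost (p : ℝ) : Measurable (planCost (S := S) p) :=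
  Measure.measurable_lintegral (measurable_edist.pow_const p)

namespace IsCoupling

variable {γ : Measure (S × S)}

lemma quantizationError_fst (hγ : IsCoupling γ μ ν) (hτ : Measurable τ) (p : ℝ) :
    (∫⁻ z, edist z.1 (τ z.1) ^ p ∂γ) ^ (1 / p) = quantizationError p τ μ := by
  have hm : Measurable fun x => edist x (τ x) ^ p := by fun_prop
  rw [hγ.lintegral_fst hm, quantizationError]

lemma quantizationError_snd (hγ : IsCoupling γ μ ν) (hτ : Measurable τ) (p : ℝ) :
    (∫⁻ z, edist z.2 (τ z.2) ^ p ∂γ) ^ (1 / p) = quantizationError p τ ν := by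
  have hm : Measurable fun x => edist x (τ x) ^ p := by fun_prop
  rw [hγ.lintegral_snd hm, quantizationError]

lemma planCost_rpow_le_of_map (hp : 1 ≤ p) (hγ : IsCoupling γ μ ν) (hτ : Measurable τ) :
    planCost p γ ^ (1 / p) ≤ quantizationError p τ μ +
      (∫⁻ z, edist (τ z.1) (τ z.2) ^ p ∂γ) ^ (1 / p) + quantizationError p τ ν := by
  rw [← hγ.quantizationError_fst hτ, ← hγ.quantizationError_snd hτ]
  refine le_trans ?_ (lintegral_rpow_add_add_le hp γ (by fun_prop) (by fun_prop) (by fun_prop))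
  unfold planCost
  gcongr with z
  simpa only [edist_comm (τ z.2)] using edist_triangle4 z.1 (τ z.1) (τ z.2) z.2

lemma lintegral_map_rpow_le_planCost (hp : 1 ≤ p) (hγ : IsCoupling γ μ ν) (hτ : Measurable τ) :
    (∫⁻ z, edist (τ z.1) (τ z.2) ^ p ∂γ) ^ (1 / p) ≤
      quantizationError p τ μ + planCost p γ ^ (1 / p) + quantizationError p τ ν := by
  rw [← hγ.quantizationError_fst hτ, ← hγ.quantizationError_snd hτ]
  refine le_trans ?_ (lintegral_rpow_add_add_le hp γ (by fun_prop) measurable_edist (by fun_prop))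
  gcongr with z
  simpa only [edist_comm (τ z.1)] using edist_triangle4 (τ z.1) z.1 z.2 (τ z.2)

lemma map_prodMap {ι κ X Y : Type*} [MeasurableSpace ι] [MeasurableSpace κ] [MeasurableSpace X]
    [MeasurableSpace Y] {γ : Measure (X × Y)} {μ : Measure X} {ν : Measure Y}
    (hγ : IsCoupling γ μ ν) {T : X → ι} {U : Y → κ} (hT : Measurable T) (hU : Measurable U) :
    IsCoupling (γ.map (Prod.map T U)) (μ.map T) (ν.map U) where
  fst := by
    rw [← hγ.fst, Measure.fst, Measure.fst, Measure.map_map measurable_fst (hT.prodMap hU),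
      Measure.map_map hT measurable_fst]
    rfl
  snd := by
    rw [← hγ.snd, Measure.snd, Measure.snd, Measure.map_map measurable_snd (hT.prodMap hU),
      Measure.map_map hU measurable_snd]
    rfl

end IsCoupling

lemma exists_planCost_cellCoupling_le (hp : 1 ≤ p) {ι : Type*} [Finite ι] [MeasurableSpace ι]
    [MeasurableSingletonClass ι] {T : S → ι} (hT : Measurable T) (e : ι → S)
    [IsProbabilityMeasure μ] [IsProbabilityMeasure ν] {γ : Measure (S × S)}
    (hγ : IsCoupling γ μ ν) {ε : ℝ≥0∞} (hε : ε ≠ 0) :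
    ∃ k n, planCost p (cellCoupling T T k n ν μ) ^ (1 / p) ≤
      2 * (quantizationError p (e ∘ T) μ + quantizationError p (e ∘ T) ν) +
        planCost p γ ^ (1 / p) + ε := by
  have hp0 : 0 < p := zero_lt_one.trans_le hp
  have := Fintype.ofFinite ι
  have hτ : Measurable (e ∘ T) := (measurable_of_finite e).comp hT
  have := Measure.isProbabilityMeasure_map (μ := μ) hT.aemeasurable
  have := Measure.isProbabilityMeasure_map (μ := ν) hT.aemeasurable
  set c : ι × ι → ℝ≥0∞ := fun z => edist (e z.1) (e z.2) ^ p
  have hC : ∑ z, c z ≠ ∞ :=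
    ENNReal.sum_ne_top.2 fun z _ => ENNReal.rpow_ne_top_of_nonneg hp0.le (edist_ne_top _ _)
  obtain ⟨k, n, hkn⟩ := exists_lintegral_mul_gridDensity_le (hγ.map_prodMap hT hT) hC
    (fun z => Finset.single_le_sum (fun _ _ => zero_le) (Finset.mem_univ z))
    (ENNReal.rpow_pos_of_nonneg (pos_iff_ne_zero.2 hε) hp0.le).ne'
  rw [← lintegral_cellCoupling hT hT, lintegral_map (measurable_of_finite c) (hT.prodMap hT)] at hkn
  refine ⟨k, n, ?_⟩
  set a := quantizationError p (e ∘ T) μ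
  set b := quantizationError p (e ∘ T) ν
  calc planCost p (cellCoupling T T k n ν μ) ^ (1 / p)
      ≤ a + (∫⁻ z, c (Prod.map T T z) ∂cellCoupling T T k n ν μ) ^ (1 / p) + b :=
        (isCoupling_cellCoupling hT hT k n).planCost_rpow_le_of_map hp hτ
    _ ≤ a + (∫⁻ z, c (Prod.map T T z) ∂γ + ε ^ p) ^ (1 / p) + b := by gcongr
    _ ≤ a + ((∫⁻ z, c (Prod.map T T z) ∂γ) ^ (1 / p) + (ε ^ p) ^ (1 / p)) + b := by
        gcongr
        exact ENNReal.rpow_add_le_add_rpow _ _ (by positivity) ((div_le_one hp0).2 hp)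
    _ ≤ a + (a + planCost p γ ^ (1 / p) + b + (ε ^ p) ^ (1 / p)) + b := by
        gcongr
        exact hγ.lintegral_map_rpow_le_planCost hp hτ
    _ = 2 * (a + b) + planCost p γ ^ (1 / p) + ε := by
        rw [one_div, ENNReal.rpow_rpow_inv hp0.ne']
        ring

open Filter Topology

lemma tendsto_quantizationError_nearestPt {x : ℕ → S} (hx : DenseRange x) (hp : 1 ≤ p)
    (hμ : pMoment p (x 0) μ < ∞) :
    Tendsto (fun N => quantizationError p (SimpleFunc.nearestPt x N) μ) atTop (𝓝 0) := by
  have hp0 : 0 < p := zero_lt_one.trans_le hp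
  have hlim : Tendsto (fun N => ∫⁻ y, edist y (SimpleFunc.nearestPt x N y) ^ p ∂μ) atTop
      (𝓝 (∫⁻ _, 0 ∂μ)) := by
    refine tendsto_lintegral_of_dominated_convergence (fun y => edist y (x 0) ^ p)
      (fun N => (measurable_id.edist (SimpleFunc.measurable _)).pow_const p)
      (fun N => .of_forall fun y => ENNReal.rpow_le_rpow ?_ hp0.le) hμ.ne
      (.of_forall fun y => ?_)
    · rw [edist_comm y, edist_comm y]
      exact SimpleFunc.edist_nearestPt_le _ _ N.zero_le
    · have hy := (SimpleFunc.tendsto_nearestPt (hx y)).edist (tendsto_const_nhds (x := y))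
      simp only [edist_self, edist_comm _ y] at hy
      simpa only [ENNReal.zero_rpow_of_pos hp0] using hy.ennrpow_const p
  rw [lintegral_zero] at hlim
  simpa only [quantizationError, ENNReal.zero_rpow_of_pos (one_div_pos.2 hp0)] using
    hlim.ennrpow_const (1 / p)

end MeasurableSelection

section OptimalPlan

open Filter TopologicalSpace

variable {S : Type*} [MetricSpace S] [MeasurableSpace S] [OpensMeasurableSpace S]
  [SecondCountableTopology S] {p : ℝ} {ν : Measure S}

lemma MemWp.exists_seq_iInf_planCost_eq (hp : 1 ≤ p) (hν : MemWp p ν) :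
    ∃ κ : ℕ → Measure S → Measure (S × S), (∀ k, Measurable (κ k)) ∧
      (∀ k μ, IsProbabilityMeasure μ → IsCoupling (κ k μ) μ ν) ∧
      ∀ μ, MemWp p μ → ⨅ k, planCost p (κ k μ) = transportCost p μ ν := by
  have := hν.1
  have : Nonempty S := ⟨hν.2.choose⟩
  choose T hT hTx using exists_comp_eq_nearestPt (denseSeq S)
  obtain ⟨u, hu⟩ := exists_surjective_nat (Σ N : ℕ, ℕ × (Fin (N + 1) × Fin (N + 1) → ℕ))
  refine ⟨fun k => cellCoupling (T (u k).1) (T (u k).1) (u k).2.1 (u k).2.2 ν,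
    fun k => measurable_cellCoupling (hT _) (hT _) _ _,
    fun k μ _ => isCoupling_cellCoupling (hT _) (hT _) _ _, fun μ hμ => ?_⟩
  have := hμ.1
  refine le_antisymm (le_iInf₂ fun γ hγ => ?_)
    (le_iInf fun k => transportCost_le_planCost (isCoupling_cellCoupling (hT _) (hT _) _ _))
  have hlim {μ : Measure S} (hμ : MemWp p μ) :=
    tendsto_quantizationError_nearestPt (denseRange_denseSeq S) hp (hμ.pMoment_lt_top hp _)
  have hbound := ((ENNReal.Tendsto.const_mul (a := 2) ((hlim hμ).add (hlim hν))
    (.inr ENNReal.ofNat_ne_top)).add_const (planCost p γ ^ (1 / p))).add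
    ENNReal.tendsto_inv_nat_nhds_zero
  simp only [add_zero, mul_zero, zero_add] at hbound
  rw [← ENNReal.rpow_le_rpow_iff (one_div_pos.2 (zero_lt_one.trans_le hp))]
  refine ge_of_tendsto' hbound fun N => ?_
  obtain ⟨k, n, hkn⟩ := exists_planCost_cellCoupling_le hp (hT N)
    (fun i : Fin (N + 1) => denseSeq S i) hγ (ENNReal.inv_ne_zero.2 (ENNReal.natCast_ne_top N))
  obtain ⟨j, hj⟩ := hu ⟨N, k, n⟩
  rw [hTx] at hkn
  refine le_trans ?_ hkn
  gcongr
  exact iInf_le_of_le j (congrArg (fun i : Σ N : ℕ, ℕ × (Fin (N + 1) × Fin (N + 1) → ℕ) =>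
    planCost p (cellCoupling (T i.1) (T i.1) i.2.1 i.2.2 ν μ)) hj).le

lemma MemWp.exists_measurable_planCost_le (hp : 1 ≤ p) (hν : MemWp p ν) {ε : ℝ≥0∞} (hε : ε ≠ 0) :
    ∃ κ : Measure S → Measure (S × S), Measurable κ ∧
      ∀ μ, MemWp p μ → IsCoupling (κ μ) μ ν ∧ planCost p (κ μ) ≤ transportCost p μ ν + ε := by
  obtain ⟨κ, hκ, hcpl, hinf⟩ := hν.exists_seq_iInf_planCost_eq hp
  obtain ⟨g, hg, hgκ, hle⟩ := exists_measurable_le_iInf_add hκ (measurable_planCost p) hε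
  refine ⟨g, hg, fun μ hμ => ⟨?_, hinf μ hμ ▸ hle μ⟩⟩
  obtain ⟨i, hi⟩ := hgκ μ
  exact hi ▸ hcpl i μ hμ.1

lemma MemWp.aemeasurable_transportCost (hp : 1 ≤ p) (hν : MemWp p ν) {P : Measure (Measure S)}
    (hP : ∀ᵐ μ ∂P, MemWp p μ) : AEMeasurable (fun μ => transportCost p μ ν) P := by
  obtain ⟨κ, hκ, -, hinf⟩ := hν.exists_seq_iInf_planCost_eq hp
  exact ⟨_, .iInf fun i => (measurable_planCost p).comp (hκ i), hP.mono fun μ hμ =>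
    (hinf μ hμ).symm⟩

end OptimalPlan

section ProbabilityMeasureSpace

open MeasurableSpace

variable {X : Type*} [MeasurableSpace X]

lemma measurableEmbedding_toMeasure :
    MeasurableEmbedding ((↑) : ProbabilityMeasure X → Measure X) :=
  .subtype_coe measurableSet_isProbabilityMeasure

variable [CountablyGenerated X]

instance countablyGenerated_probabilityMeasure : CountablyGenerated (ProbabilityMeasure X) := by
  set C : Set (Set X) := generateSetAlgebra (countableGeneratingSet X)
  have hC : IsSetAlgebra C := isSetAlgebra_generateSetAlgebra
  have hgen : ‹MeasurableSpace X› = generateFrom C := by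
    rw [generateFrom_generateSetAlgebra_eq, generateFrom_countableGeneratingSet]
  have hmeas (s : C) : MeasurableSet (s : Set X) := hgen ▸ measurableSet_generateFrom s.2
  have := (countable_generateSetAlgebra (countable_countableGeneratingSet (α := X))).to_subtype
  let eval : ProbabilityMeasure X → C → ℝ≥0∞ := fun μ s => (μ : Measure X) s
  have (μ : ProbabilityMeasure X) : IsProbabilityMeasure μ.1 := μ.2
  have hle : ProbabilityMeasure.instMeasurableSpace ≤ .comap eval .pi :=
    measurable_iff_comap_le.1 <| @Measurable.measure_of_isPiSystem_of_isProbabilityMeasure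
      _ _ (.comap eval .pi) _ _ this _ hgen (fun s hs t ht _ => hC.inter_mem hs ht)
      fun s hs => (measurable_pi_apply (⟨s, hs⟩ : C)).comp (comap_measurable eval)
  have hge : .comap eval .pi ≤ ProbabilityMeasure.instMeasurableSpace :=
    measurable_iff_comap_le.1 <| measurable_pi_lambda _ fun s =>
      (Measure.measurable_coe (hmeas s)).comp measurable_subtype_coe
  exact hle.antisymm hge ▸ CountablyGenerated.comap eval

instance separatesPoints_probabilityMeasure : SeparatesPoints (ProbabilityMeasure X) where
  separates μ ν h := Subtype.ext <| Measure.ext fun s hs => by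
    have hset : MeasurableSet {θ : ProbabilityMeasure X | (θ : Measure X) s = (μ : Measure X) s} :=
      measurableSet_eq_fun ((Measure.measurable_coe hs).comp measurable_subtype_coe)
        measurable_const
    exact (h _ hset rfl).symm

lemma measurableSet_singleton_of_isProbabilityMeasure (ν : Measure X)
    [hν : IsProbabilityMeasure ν] : MeasurableSet {ν} := by
  have : MeasurableSingletonClass (ProbabilityMeasure X) :=
    measurableSingletonClass_of_countablySeparated
  have himage : ProbabilityMeasure.toMeasure '' {⟨ν, hν⟩} = {ν} := Set.image_singleton
  exact himage ▸ measurableEmbedding_toMeasure.measurableSet_image.2 (measurableSet_singleton _)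

end ProbabilityMeasureSpace

section ConditionalLaw

variable {Ω 𝓧 𝓨 𝓩 : Type*} [MeasurableSpace Ω] [MeasurableSpace 𝓧] [MeasurableSpace 𝓨]
  [MeasurableSpace 𝓩] {P : Measure Ω} [IsFiniteMeasure P] {X : Ω → 𝓧} {Y : Ω → 𝓨} {Z : Ω → 𝓩}

lemma hasCondDistrib_of_measure_inter_preimage {κ : Kernel 𝓧 𝓨} [IsFiniteKernel κ]
    (hX : Measurable X) (hY : Measurable Y)
    (h : ∀ A, MeasurableSet A → ∀ B, MeasurableSet B →
      P (X ⁻¹' A ∩ Y ⁻¹' B) = ∫⁻ ω in X ⁻¹' A, κ (X ω) B ∂P) :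
    HasCondDistrib Y X κ P where
  map_eq := Measure.ext_prod fun {A B} hA hB => by
    rw [Measure.map_apply (hX.prodMk hY) (hA.prod hB), Measure.compProd_apply_prod hA hB,
      setLIntegral_map hA (κ.measurable_coe hB) hX, Set.mk_preimage_prod, h A hA B hB]

lemma hasCondDistrib_comp_of_prod {κ : Kernel 𝓩 𝓧} {η : Kernel 𝓩 𝓨} {π : Kernel 𝓧 𝓩}
    [IsFiniteKernel κ] [IsMarkovKernel η] [IsFiniteKernel π]
    (h : HasCondDistrib (fun ω => (X ω, Y ω)) Z (κ ×ₖ η) P) (hπ : HasCondDistrib Z X π P) :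
    HasCondDistrib Y X (η ∘ₖ π) P := by
  have hprod : κ ⊗ₖ η.prodMkRight 𝓧 = κ ×ₖ η := by
    ext z s hs
    rw [Kernel.compProd_apply hs, Kernel.prod_apply' _ _ _ hs]
    rfl
  have hZX : HasCondDistrib Y (fun ω => (Z ω, X ω)) (η.prodMkRight 𝓧) P :=
    .of_compProd (hprod.symm ▸ h)
  have hXZ : HasCondDistrib Y (fun ω => (X ω, Z ω)) (η.prodMkLeft 𝓧) P :=
    HasCondDistrib.comp_right (Z := fun ω => (Z ω, X ω)) (hf := measurable_swap) hZX
  have hassoc : P.map (fun ω => ((X ω, Z ω), Y ω)) = P.map X ⊗ₘ π ⊗ₘ η.prodMkLeft 𝓧 := by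
    rw [hXZ.map_eq, hπ.map_eq]
  have hZY : HasCondDistrib (fun ω => (Z ω, Y ω)) X (π ⊗ₖ η.prodMkLeft 𝓧) P := by
    have := hXZ.aemeasurable_snd
    have := hπ.aemeasurable
    refine ⟨by fun_prop, ?_⟩
    rw [← Measure.compProd_assoc', ← hassoc,
      AEMeasurable.map_map_of_aemeasurable (by fun_prop) (by fun_prop)]
    rfl
  simpa only [Kernel.snd_compProd_prodMkLeft] using hZY.snd

lemma ae_eq_of_hasCondDistrib {κ η : Kernel 𝓧 𝓨} [IsFiniteKernel κ] [IsFiniteKernel η]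
    {f : 𝓩 → 𝓨} [MeasurableSpace.CountablyGenerated 𝓩] (hf : MeasurableEmbedding f)
    (hY : ∀ᵐ ω ∂P, Y ω ∈ Set.range f)
    (hκ : HasCondDistrib Y X κ P) (hη : HasCondDistrib Y X η P) :
    ∀ᵐ ω ∂P, κ (X ω) = η (X ω) := by
  have hconc {κ : Kernel 𝓧 𝓨} [IsFiniteKernel κ] (hκ : HasCondDistrib Y X κ P) :
      ∀ᵐ x ∂P.map X, (κ x).restrict (Set.range f) = κ x := by
    have hmem : ∀ᵐ z ∂P.map X ⊗ₘ κ, z.2 ∈ Set.range f := by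
      rw [← hκ.map_eq]
      exact (ae_map_iff hκ.aemeasurable (measurable_snd hf.measurableSet_range)).2 hY
    exact (Measure.ae_ae_of_ae_compProd hmem).mono fun x hx => Measure.restrict_eq_self_of_ae_mem hx
  have hcomap : P.map X ⊗ₘ κ.comapRight hf = P.map X ⊗ₘ η.comapRight hf :=
    Measure.ext_prod fun {A B} hA hB => by
      have := congrArg (· (A ×ˢ (f '' B))) (hκ.map_eq.symm.trans hη.map_eq)
      simpa only [Measure.compProd_apply_prod hA (hf.measurableSet_image.2 hB),
        Measure.compProd_apply_prod hA hB, Kernel.comapRight_apply' _ hf _ hB] using this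
  filter_upwards [ae_of_ae_map hκ.aemeasurable_fst (Kernel.ae_eq_of_compProd_eq hcomap),
    ae_of_ae_map hκ.aemeasurable_fst (hconc hκ), ae_of_ae_map hκ.aemeasurable_fst (hconc hη)]
    with ω hω hκω hηω
  rw [Kernel.comapRight_apply, Kernel.comapRight_apply] at hω
  rw [← hκω, ← hηω, ← hf.map_comap, hω, hf.map_comap]

end ConditionalLaw

section EmpiricalMeasure

variable {S T : Type*} [MeasurableSpace S] [MeasurableSpace T] {ι : Type*} [Fintype ι]

/-- The empirical measure of the finite sample `x`; it is `0` for the empty sample. -/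
def empMeasure (x : ι → S) : Measure S :=
  (Fintype.card ι : ℝ≥0∞)⁻¹ • ∑ i, Measure.dirac (x i)

lemma empShift_eq_empMeasure (n m : ℕ) (ω : ℕ → S) :
    empShift n m ω = empMeasure fun i : Fin m => ω (i + n) := by
  simp only [empShift, empMeasure, Finset.sum_range, Fintype.card_fin]

lemma lintegral_empMeasure (x : ι → S) {f : S → ℝ≥0∞} (hf : Measurable f) :
    ∫⁻ y, f y ∂empMeasure x = (Fintype.card ι : ℝ≥0∞)⁻¹ * ∑ i, f (x i) := by
  simp only [empMeasure, lintegral_smul_measure, lintegral_finsetSum_measure,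
    lintegral_dirac' _ hf, smul_eq_mul]

lemma measurable_empMeasure : Measurable (empMeasure : (ι → S) → Measure S) :=
  Measure.measurable_of_measurable_coe _ fun s hs => by
    simp only [← lintegral_indicator_one hs, lintegral_empMeasure _ (measurable_one.indicator hs)]
    exact (Finset.measurable_sum _ fun i _ =>
      (measurable_one.indicator hs).comp (measurable_pi_apply i)).const_mul _

lemma measurable_empShift (n m : ℕ) : Measurable (empShift n m : (ℕ → S) → Measure S) := by
  rw [funext (empShift_eq_empMeasure n m)]
  exact measurable_empMeasure.comp (by fun_prop)

lemma map_empMeasure {f : S → T} (hf : Measurable f) (x : ι → S) :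
    (empMeasure x).map f = empMeasure (f ∘ x) := by
  simp only [empMeasure, Measure.map_smul, Measure.map_finset_sum hf.aemeasurable,
    Measure.map_dirac' hf, Function.comp_apply]

lemma inv_card_mul_card [Nonempty ι] :
    (Fintype.card ι : ℝ≥0∞)⁻¹ * Fintype.card ι = 1 :=
  ENNReal.inv_mul_cancel (Nat.cast_ne_zero.2 Fintype.card_ne_zero) (ENNReal.natCast_ne_top _)

instance isProbabilityMeasure_empMeasure [Nonempty ι] (x : ι → S) :
    IsProbabilityMeasure (empMeasure x) where
  measure_univ := by
    rw [← lintegral_one, lintegral_empMeasure x measurable_const]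
    simpa using inv_card_mul_card

lemma memWp_empMeasure {S : Type*} [MetricSpace S] [MeasurableSpace S] [OpensMeasurableSpace S]
    [Nonempty ι] {p : ℝ} (hp : 1 ≤ p) (x : ι → S) : MemWp p (empMeasure x) := by
  let x₀ := x (Classical.arbitrary ι)
  refine (memWp_iff hp x₀).2 ⟨inferInstance, ?_⟩
  have hm : Measurable fun y => edist y x₀ ^ p := measurable_edist_rpow_const measurable_id p x₀
  rw [pMoment, lintegral_empMeasure x hm]
  refine ENNReal.mul_lt_top (ENNReal.inv_lt_top.2 (Nat.cast_pos.2 Fintype.card_pos)) ?_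
  exact ENNReal.sum_lt_top.2 fun i _ =>
    ENNReal.rpow_lt_top_of_nonneg (zero_le_one.trans hp) (edist_ne_top _ _)

end EmpiricalMeasure

section IIDKernel

variable {S T : Type*} [MeasurableSpace S] [MeasurableSpace T] [Nonempty S] [Nonempty T]
  (ι : Type*) [Fintype ι]

open Classical in
/-- Sends a probability measure `μ` to the law of an i.i.d. sample of `μ` indexed by `ι`. Any other
measure is first replaced by a Dirac mass, which makes the kernel Markov. -/
def iidKernel : Kernel (Measure S) (ι → S) where
  toFun μ := .pi fun _ =>
    if IsProbabilityMeasure μ then μ else Measure.dirac (Classical.arbitrary S)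
  measurable' := by
    set θ : Measure S → Measure S := fun μ =>
      if IsProbabilityMeasure μ then μ else Measure.dirac (Classical.arbitrary S)
    have hprob (μ : Measure S) : IsProbabilityMeasure (θ μ) := by
      dsimp only [θ]
      split_ifs <;> infer_instance
    have hθ : Measurable θ := .ite measurableSet_isProbabilityMeasure measurable_id measurable_const
    refine .measure_of_isPiSystem_of_isProbabilityMeasure generateFrom_pi.symm isPiSystem_pi ?_
    rintro _ ⟨s, hs, rfl⟩
    simp only [Measure.pi_pi]
    exact Finset.measurable_prod _ fun i _ =>
      (Measure.measurable_coe (hs i (Set.mem_univ i))).comp hθ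

variable {ι}

lemma iidKernel_apply (μ : Measure S) [IsProbabilityMeasure μ] :
    iidKernel ι μ = .pi fun _ => μ := by
  simp only [iidKernel, Kernel.coe_mk, if_pos ‹IsProbabilityMeasure μ›]

instance isMarkovKernel_iidKernel : IsMarkovKernel (iidKernel ι : Kernel (Measure S) (ι → S)) where
  isProbabilityMeasure μ := by
    simp only [iidKernel, Kernel.coe_mk]
    split_ifs <;> infer_instance

variable (ι) in
/-- The law of the empirical measure of an i.i.d. sample indexed by `ι`. -/
def empKernel : Kernel (Measure S) (Measure S) := (iidKernel ι).map empMeasure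

instance isMarkovKernel_empKernel : IsMarkovKernel (empKernel ι : Kernel (Measure S) _) :=
  Kernel.IsMarkovKernel.map _ measurable_empMeasure

lemma empKernel_apply (μ : Measure S) [IsProbabilityMeasure μ] :
    empKernel ι μ = (Measure.pi fun _ : ι => μ).map empMeasure := by
  rw [empKernel, Kernel.map_apply _ measurable_empMeasure, iidKernel_apply]

lemma map_empKernel {f : S → T} (hf : Measurable f) (μ : Measure S) [IsProbabilityMeasure μ] :
    (empKernel ι μ).map (Measure.map f) = empKernel ι (μ.map f) := by
  have := Measure.isProbabilityMeasure_map (μ := μ) hf.aemeasurable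
  rw [empKernel_apply, empKernel_apply, ← Measure.pi_map_pi fun _ => hf.aemeasurable,
    Measure.map_map (Measure.measurable_map f hf) measurable_empMeasure,
    Measure.map_map measurable_empMeasure (by fun_prop)]
  exact congrArg (Measure.map · _) (funext (map_empMeasure hf))

lemma lintegral_lintegral_empKernel [Nonempty ι] (μ : Measure S) [IsProbabilityMeasure μ]
    {f : S → ℝ≥0∞} (hf : Measurable f) : ∫⁻ e, ∫⁻ x, f x ∂e ∂empKernel ι μ = ∫⁻ x, f x ∂μ := by
  have hcoord (i : ι) : ∫⁻ x, f (x i) ∂Measure.pi (fun _ : ι => μ) = ∫⁻ x, f x ∂μ :=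
    (measurePreserving_eval (fun _ => μ) i).lintegral_comp hf
  rw [empKernel_apply, lintegral_map (Measure.measurable_lintegral hf) measurable_empMeasure]
  simp only [lintegral_empMeasure _ hf]
  rw [lintegral_const_mul _ (by fun_prop), lintegral_finsetSum _ fun i _ => by fun_prop]
  simp only [hcoord, Finset.sum_const, Finset.card_univ, nsmul_eq_mul]
  rw [← mul_assoc, inv_card_mul_card, one_mul]

lemma map_bind_empKernel {Q : Measure (Measure S)} (hQ : ∀ᵐ μ ∂Q, IsProbabilityMeasure μ)
    {f : S → T} (hf : Measurable f) :
    (Q.bind (empKernel ι)).map (Measure.map f) = (Q.map (Measure.map f)).bind (empKernel ι) := by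
  have hmap := Measure.measurable_map f hf
  rw [Measure.map_comp _ _ hmap, Measure.bind.eq_def (Q.map _),
    Measure.map_map (empKernel ι).measurable hmap]
  exact Measure.bind_congr_right (hQ.mono fun μ _ => by
    rw [Kernel.map_apply _ hmap, map_empKernel hf, Function.comp_apply])

lemma lintegral_lintegral_bind_empKernel [Nonempty ι] {Q : Measure (Measure S)}
    (hQ : ∀ᵐ μ ∂Q, IsProbabilityMeasure μ) {f : S → ℝ≥0∞} (hf : Measurable f) :
    ∫⁻ e, ∫⁻ x, f x ∂e ∂Q.bind (empKernel ι) = ∫⁻ μ, ∫⁻ x, f x ∂μ ∂Q := by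
  rw [Measure.lintegral_bind (empKernel ι).aemeasurable
    (Measure.measurable_lintegral hf).aemeasurable]
  exact lintegral_congr_ae (hQ.mono fun μ _ => lintegral_lintegral_empKernel μ hf)

lemma ae_memWp_bind_empKernel {S : Type*} [MetricSpace S] [MeasurableSpace S]
    [OpensMeasurableSpace S] [Nonempty S] [Nonempty ι] {p : ℝ} (hp : 1 ≤ p)
    (Q : Measure (Measure S)) : ∀ᵐ e ∂Q.bind (empKernel ι), MemWp p e := by
  rw [empKernel, ← Measure.map_comp _ _ measurable_empMeasure]
  exact (ae_map_iff measurable_empMeasure.aemeasurable (measurableSet_memWp hp)).2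
    (.of_forall fun x => memWp_empMeasure hp x)

end IIDKernel

section PredictiveTransport

variable {X Y : Type*} [MeasurableSpace X] [MeasurableSpace Y]

lemma measurable_measure_fst : Measurable (Measure.fst : Measure (X × Y) → Measure X) :=
  Measure.measurable_map _ measurable_fst

lemma measurable_measure_snd : Measurable (Measure.snd : Measure (X × Y) → Measure Y) :=
  Measure.measurable_map _ measurable_snd

lemma isCoupling_map_fst_snd (Q : Measure (Measure (X × Y))) :
    IsCoupling (Q.map fun γ => (γ.fst, γ.snd)) (Q.map Measure.fst) (Q.map Measure.snd) where
  fst := Measure.fst_map_prodMk measurable_measure_snd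
  snd := Measure.snd_map_prodMk measurable_measure_fst

variable {S : Type*} [MetricSpace S] [MeasurableSpace S] {p : ℝ} {P : Measure (Measure S)}
  {ν : Measure S}

lemma ofReal_wassW_wassW_rpow_le (hp : 0 < p) (Q : Measure (Measure (S × S))) :
    ENNReal.ofReal (wassW (wassW (fun u v => dist u v) p) p
        (Q.map Measure.fst) (Q.map Measure.snd) ^ p) ≤ ∫⁻ γ, planCost p γ ∂Q := by
  refine (ofReal_wassW_rpow_le_lintegral (fun _ _ => wassW_nonneg fun _ _ => dist_nonneg) hp
    (isCoupling_map_fst_snd Q)).trans ((lintegral_map_le _ _).trans (lintegral_mono fun γ => ?_))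
  simpa only [planCost, edist_rpow_eq_ofReal hp.le] using
    ofReal_wassW_rpow_le_lintegral (fun _ _ => dist_nonneg) hp (γ := γ) ⟨rfl, rfl⟩

variable [OpensMeasurableSpace S]

lemma lintegral_pMoment_eq_top_of_lintegral_transportCost [IsProbabilityMeasure P] (hp : 1 ≤ p)
    (hP : ∀ᵐ μ ∂P, MemWp p μ) (hν : MemWp p ν) (x₀ : S)
    (h : ∫⁻ μ, transportCost p μ ν ∂P = ∞) : ∫⁻ μ, pMoment p x₀ μ ∂P = ∞ := by
  have := hν.1
  have hle : ∫⁻ μ, transportCost p μ ν ∂P ≤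
      2 ^ (p - 1) * (∫⁻ μ, pMoment p x₀ μ ∂P + pMoment p x₀ ν) :=
    calc ∫⁻ μ, transportCost p μ ν ∂P
        ≤ ∫⁻ μ, 2 ^ (p - 1) * (pMoment p x₀ μ + pMoment p x₀ ν) ∂P :=
          lintegral_mono_ae (hP.mono fun μ hμ =>
            have := hμ.1
            transportCost_le hp x₀)
      _ = 2 ^ (p - 1) * (∫⁻ μ, pMoment p x₀ μ ∂P + pMoment p x₀ ν) := by
          rw [lintegral_const_mul' _ _ (two_rpow_sub_one_ne_top hp),
            lintegral_add_right _ measurable_const, lintegral_const, measure_univ, mul_one]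
  by_contra hne
  rw [h, top_le_iff] at hle
  exact ENNReal.mul_ne_top (two_rpow_sub_one_ne_top hp)
    (ENNReal.add_ne_top.2 ⟨hne, (hν.pMoment_lt_top hp x₀).ne⟩) hle

lemma IsCoupling.lintegral_pMoment_le {P' : Measure (Measure S)}
    {γ : Measure (Measure S × Measure S)} (hγ : IsCoupling γ P P') (hp : 1 ≤ p) (x₀ : S) :
    ∫⁻ μ, pMoment p x₀ μ ∂P ≤
      2 ^ (p - 1) * (∫⁻ z, transportCost p z.1 z.2 ∂γ + ∫⁻ μ, pMoment p x₀ μ ∂P') := by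
  have hm := measurable_pMoment (S := S) p x₀
  have hm_snd : Measurable fun z : Measure S × Measure S => pMoment p x₀ z.2 :=
    hm.comp measurable_snd
  rw [← hγ.lintegral_fst hm, ← hγ.lintegral_snd hm, ← lintegral_add_right _ hm_snd,
    ← lintegral_const_mul' _ _ (two_rpow_sub_one_ne_top hp)]
  exact lintegral_mono fun z => pMoment_le_transportCost_add hp z.1 z.2 x₀

variable [SecondCountableTopology S]

lemma ofReal_wassW_bind_empKernel_rpow_le [Nonempty S] {ι : Type*} [Fintype ι] [Nonempty ι]
    (hp : 0 < p) {Q : Measure (Measure (S × S))} (hQ : ∀ᵐ γ ∂Q, IsProbabilityMeasure γ) :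
    ENNReal.ofReal (wassW (wassW (fun u v => dist u v) p) p
        ((Q.map Measure.fst).bind (empKernel ι)) ((Q.map Measure.snd).bind (empKernel ι)) ^ p) ≤
      ∫⁻ γ, planCost p γ ∂Q := by
  have h := ofReal_wassW_wassW_rpow_le hp (Q.bind (empKernel ι))
  have hfst := map_bind_empKernel (ι := ι) hQ measurable_fst
  have hsnd := map_bind_empKernel (ι := ι) hQ measurable_snd
  unfold planCost at h ⊢
  rw [lintegral_lintegral_bind_empKernel hQ (measurable_edist.pow_const p)] at h
  exact hfst ▸ hsnd ▸ h

lemma ofReal_wassW_bind_empKernel_rpow_le_lintegral [Nonempty S] {ι : Type*} [Fintype ι]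
    [Nonempty ι] [IsProbabilityMeasure P] (hp : 1 ≤ p) (hP : ∀ᵐ μ ∂P, MemWp p μ)
    (hν : MemWp p ν) :
    ENNReal.ofReal (wassW (wassW (fun u v => dist u v) p) p
        (P.bind (empKernel ι)) (empKernel ι ν) ^ p) ≤ ∫⁻ μ, transportCost p μ ν ∂P := by
  refine ENNReal.le_of_forall_pos_le_add fun ε hε _ => ?_
  obtain ⟨κ, hκ, hκν⟩ := hν.exists_measurable_planCost_le hp (ENNReal.coe_ne_zero.2 hε.ne')
  have hκ_fst : Measure.fst ∘ κ =ᵐ[P] id := hP.mono fun μ hμ => (hκν μ hμ).1.fst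
  have hκ_snd : Measure.snd ∘ κ =ᵐ[P] fun _ => ν := hP.mono fun μ hμ => (hκν μ hμ).1.snd
  have hfst : (P.map κ).map Measure.fst = P := by
    rw [Measure.map_map measurable_measure_fst hκ, Measure.map_congr hκ_fst, Measure.map_id]
  have hsnd : (P.map κ).map Measure.snd = Measure.dirac ν := by
    rw [Measure.map_map measurable_measure_snd hκ, Measure.map_congr hκ_snd, Measure.map_const,
      measure_univ, one_smul]
  have hprob : ∀ᵐ γ ∂P.map κ, IsProbabilityMeasure γ :=
    (ae_map_iff hκ.aemeasurable measurableSet_isProbabilityMeasure).2 <| hP.mono fun μ hμ =>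
      have := hμ.1
      (hκν μ hμ).1.isProbabilityMeasure
  have h := ofReal_wassW_bind_empKernel_rpow_le (ι := ι) (zero_lt_one.trans_le hp) hprob
  rw [hfst, hsnd, Measure.dirac_bind (empKernel ι).measurable] at h
  calc _ ≤ ∫⁻ γ, planCost p γ ∂P.map κ := h
    _ = ∫⁻ μ, planCost p (κ μ) ∂P := lintegral_map (measurable_planCost p) hκ
    _ ≤ ∫⁻ μ, (transportCost p μ ν + ε) ∂P :=
        lintegral_mono_ae (hP.mono fun μ hμ => (hκν μ hμ).2)
    _ = ∫⁻ μ, transportCost p μ ν ∂P + ε := by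
        rw [lintegral_add_right _ measurable_const, lintegral_const, measure_univ, mul_one]

-- Every coupling has infinite cost here, so this `0` is the junk value of the Bochner integral.
lemma wassW_wassW_eq_zero_of_lintegral_pMoment_eq_top {P' : Measure (Measure S)}
    [IsProbabilityMeasure P] [IsProbabilityMeasure P'] (hp : 1 ≤ p) (hP : ∀ᵐ μ ∂P, MemWp p μ)
    (hP' : ∀ᵐ μ ∂P', MemWp p μ) {x₀ : S} (h : ∫⁻ μ, pMoment p x₀ μ ∂P = ∞)
    (h' : ∫⁻ μ, pMoment p x₀ μ ∂P' ≠ ∞) :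
    wassW (wassW (fun u v => dist u v) p) p P P' = 0 := by
  have hW (μ ν : Measure S) : 0 ≤ wassW (fun u v => dist u v) p μ ν :=
    wassW_nonneg fun _ _ => dist_nonneg
  have hp0 : 0 < p := zero_lt_one.trans_le hp
  have htop : ∫⁻ z, transportCost p z.1 z.2 ∂P.prod P' = ∞ := by
    by_contra hne
    have hle := (IsCoupling.prod P P').lintegral_pMoment_le hp x₀
    rw [h, top_le_iff] at hle
    exact ENNReal.mul_ne_top (two_rpow_sub_one_ne_top hp) (ENNReal.add_ne_top.2 ⟨hne, h'⟩) hle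
  have hcost : ∀ᵐ z ∂P.prod P', ENNReal.ofReal (wassW (fun u v => dist u v) p z.1 z.2 ^ p) =
      transportCost p z.1 z.2 := by
    filter_upwards [Measure.quasiMeasurePreserving_fst.ae hP,
      Measure.quasiMeasurePreserving_snd.ae hP'] with z hfst hsnd
    exact ofReal_wassW_dist_rpow hp hfst hsnd
  have hint : ¬ Integrable (fun z => wassW (fun u v => dist u v) p z.1 z.2 ^ p) (P.prod P') := by
    rintro ⟨-, hfin⟩
    rw [hasFiniteIntegral_iff_ofReal (.of_forall fun z => Real.rpow_nonneg (hW _ _) p),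
      lintegral_congr_ae hcost, htop] at hfin
    exact hfin.false
  refine le_antisymm ((wassW_le hW (IsCoupling.prod P P')).trans_eq ?_) (wassW_nonneg hW)
  rw [integral_undef hint, Real.zero_rpow (one_div_pos.2 hp0).ne']

variable [BorelSpace S]

lemma wassW_wassW_dirac [IsProbabilityMeasure P] (hp : 1 ≤ p) (hP : ∀ᵐ μ ∂P, MemWp p μ)
    (hν : MemWp p ν) :
    wassW (wassW (fun u v => dist u v) p) p P (Measure.dirac ν) =
      (∫⁻ μ, transportCost p μ ν ∂P).toReal ^ (1 / p) := by
  have := hν.1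
  have hmeas := hν.aemeasurable_transportCost hp hP
  have hcost : (fun μ => wassW (fun u v => dist u v) p μ ν ^ p) =ᵐ[P]
      fun μ => (transportCost p μ ν).toReal := hP.mono fun μ hμ => by
    dsimp only
    rw [← ofReal_wassW_dist_rpow hp hμ hν, ENNReal.toReal_ofReal]
    exact Real.rpow_nonneg (wassW_nonneg fun _ _ => dist_nonneg) p
  have hfin : ∀ᵐ μ ∂P, transportCost p μ ν < ∞ := hP.mono fun μ hμ =>
    ofReal_wassW_dist_rpow hp hμ hν ▸ ENNReal.ofReal_lt_top
  rw [wassW_dirac_right (measurableSet_singleton_of_isProbabilityMeasure ν)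
    (hmeas.ennreal_toReal.congr hcost.symm).aestronglyMeasurable, integral_congr_ae hcost,
    integral_toReal hmeas hfin]

theorem wassW_bind_empKernel_le [Nonempty S] (ι : Type*) [Fintype ι] [Nonempty ι]
    [IsProbabilityMeasure P] (hp : 1 ≤ p) (hP : ∀ᵐ μ ∂P, MemWp p μ) (hν : MemWp p ν) :
    wassW (wassW (fun u v => dist u v) p) p (P.bind (empKernel ι)) (empKernel ι ν) ≤
      wassW (wassW (fun u v => dist u v) p) p P (Measure.dirac ν) := by
  have hW (μ ν : Measure S) : 0 ≤ wassW (fun u v => dist u v) p μ ν :=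
    wassW_nonneg fun _ _ => dist_nonneg
  rcases eq_or_ne (∫⁻ μ, transportCost p μ ν ∂P) ∞ with htop | hfin
  · have := hν.1
    let x₀ := Classical.arbitrary S
    have hm := measurable_edist_rpow_const (measurable_id (α := S)) p x₀
    have hν' : ∀ᵐ e ∂empKernel ι ν, MemWp p e := by
      simpa only [Measure.dirac_bind (empKernel ι).measurable] using
        ae_memWp_bind_empKernel (ι := ι) hp (Measure.dirac ν)
    refine (wassW_wassW_eq_zero_of_lintegral_pMoment_eq_top hp (x₀ := x₀)
      (ae_memWp_bind_empKernel hp P) hν' ?_ ?_).trans_le (wassW_nonneg hW)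
    · rw [← lintegral_pMoment_eq_top_of_lintegral_transportCost hp hP hν x₀ htop]
      exact lintegral_lintegral_bind_empKernel (hP.mono fun μ hμ => hμ.1) hm
    · exact (lintegral_lintegral_empKernel ν hm).trans_ne (hν.pMoment_lt_top hp x₀).ne
  · have hp0 : 0 < p := zero_lt_one.trans_le hp
    rw [wassW_wassW_dirac hp hP hν, one_div,
      Real.le_rpow_inv_iff_of_pos (wassW_nonneg hW) ENNReal.toReal_nonneg hp0]
    exact (ENNReal.ofReal_le_iff_le_toReal hfin).1
      (ofReal_wassW_bind_empKernel_rpow_le_lintegral hp hP hν)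

end PredictiveTransport

section PosteriorPredictive

variable {Ω 𝓧 S : Type*} [MeasurableSpace Ω] [MeasurableSpace 𝓧] [MetricSpace S]
  [MeasurableSpace S] [BorelSpace S] [SecondCountableTopology S] [Nonempty S] {P : Measure Ω}
  [IsProbabilityMeasure P] {ι : Type*} [Fintype ι] [Nonempty ι] {X : Ω → 𝓧} {Y : Ω → ι → S}
  {θ : Ω → Measure S} {κ : Kernel (Measure S) 𝓧} [IsFiniteKernel κ] {π q : Kernel 𝓧 (Measure S)}
  [IsMarkovKernel π] [IsMarkovKernel q] {p : ℝ}

lemma ae_posteriorPredictive_eq_bind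
    (hXY : HasCondDistrib (fun ω => (X ω, Y ω)) θ (κ ×ₖ iidKernel ι) P)
    (hπ : HasCondDistrib θ X π P) (hq : HasCondDistrib (fun ω => empMeasure (Y ω)) X q P) :
    ∀ᵐ ω ∂P, q (X ω) = (π (X ω)).bind (empKernel ι) := by
  have hemp : HasCondDistrib (fun ω => empMeasure (Y ω)) X (empKernel ι ∘ₖ π) P := by
    rw [empKernel, ← Kernel.map_comp]
    exact (hasCondDistrib_comp_of_prod hXY hπ).comp_left measurable_empMeasure
  have hrange : ∀ᵐ ω ∂P, empMeasure (Y ω) ∈ Set.range ((↑) : ProbabilityMeasure S → Measure S) :=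
    .of_forall fun ω => ⟨⟨empMeasure (Y ω), inferInstance⟩, rfl⟩
  simpa only [Kernel.comp_apply] using
    ae_eq_of_hasCondDistrib measurableEmbedding_toMeasure hrange hq hemp

theorem ae_wassW_posteriorPredictive_le (hp : 1 ≤ p) (hθ : ∀ᵐ ω ∂P, MemWp p (θ ω))
    (hXY : HasCondDistrib (fun ω => (X ω, Y ω)) θ (κ ×ₖ iidKernel ι) P)
    (hπ : HasCondDistrib θ X π P) (hq : HasCondDistrib (fun ω => empMeasure (Y ω)) X q P)
    {ν : 𝓧 → Measure S} (hν : ∀ᵐ ω ∂P, MemWp p (ν (X ω))) :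
    ∀ᵐ ω ∂P, wassW (wassW (fun u v => dist u v) p) p (q (X ω)) (empKernel ι (ν (X ω))) ≤
      wassW (wassW (fun u v => dist u v) p) p (π (X ω)) (Measure.dirac (ν (X ω))) := by
  have hπWp : ∀ᵐ ω ∂P, ∀ᵐ μ ∂π (X ω), MemWp p μ := by
    have hjoint : ∀ᵐ z ∂P.map X ⊗ₘ π, MemWp p z.2 := by
      rw [← hπ.map_eq]
      exact (ae_map_iff hπ.aemeasurable (measurable_snd (measurableSet_memWp hp))).2 hθ
    exact ae_of_ae_map hπ.aemeasurable_fst (Measure.ae_ae_of_ae_compProd hjoint)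
  filter_upwards [ae_posteriorPredictive_eq_bind hXY hπ hq, hπWp, hν] with ω hqω hπω hνω
  exact hqω ▸ wassW_bind_empKernel_le ι hp hπω hνω

end PosteriorPredictive

section IIDSequence

variable {S : Type*} [MeasurableSpace S] {μ : Measure S} [IsProbabilityMeasure μ]

lemma eq_infinitePi_of_initial_cylinders {J : Measure (ℕ → S)}
    (hJ : ∀ (n : ℕ) (A : Fin n → Set S), (∀ i, MeasurableSet (A i)) →
      J {ω | ∀ i : Fin n, ω i ∈ A i} = ∏ i, μ (A i)) :
    J = .infinitePi fun _ => μ := by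
  classical
  refine Measure.eq_infinitePi _ fun s t ht => ?_
  obtain ⟨n, hn⟩ := s.exists_nat_subset_range
  let A (i : ℕ) : Set S := if i ∈ s then t i else Set.univ
  have hA (i : Fin n) : MeasurableSet (A i) := by
    dsimp only [A]
    split_ifs
    exacts [ht i, .univ]
  have hcyl : (s : Set ℕ).pi t = {ω | ∀ i : Fin n, ω i ∈ A i} := by
    ext ω
    simp only [Set.mem_pi, Finset.mem_coe, A, Set.mem_ofPred_eq]
    refine ⟨fun h i => ?_, fun h i hi => ?_⟩
    · split_ifs with hi
      exacts [h i hi, Set.mem_univ _]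
    · simpa only [if_pos hi] using h ⟨i, Finset.mem_range.1 (hn hi)⟩
  calc J ((s : Set ℕ).pi t) = ∏ i ∈ Finset.range n, μ (A i) := by
        rw [hcyl, hJ n (fun i => A i) hA, Finset.prod_range]
    _ = ∏ i ∈ s, μ (t i) := by
        simp only [A, apply_ite μ, measure_univ, Finset.prod_ite_mem,
          Finset.inter_eq_right.2 hn]

variable {ι κ : Type*} [Fintype ι] [Fintype κ] {f : ι → ℕ} {g : κ → ℕ}

lemma map_infinitePi_subsequence (hf : f.Injective) :
    (Measure.infinitePi fun _ : ℕ => μ).map (fun ω i => ω (f i)) = .pi fun _ => μ := by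
  rw [Measure.map_infinitePi_infinitePi_of_inj hf, Measure.infinitePi_eq_pi]

lemma map_infinitePi_disjoint_subsequences (hfg : (Sum.elim f g).Injective) :
    (Measure.infinitePi fun _ : ℕ => μ).map (fun ω => (fun i => ω (f i), fun j => ω (g j))) =
      (Measure.pi fun _ => μ).prod (.pi fun _ => μ) := by
  rw [← (measurePreserving_sumPiEquivProdPi fun _ : ι ⊕ κ => μ).map_eq,
    ← map_infinitePi_subsequence hfg, Measure.map_map (by fun_prop) (by fun_prop)]
  rfl

lemma map_infinitePi_empShift [Nonempty S] (n m : ℕ) :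
    (Measure.infinitePi fun _ : ℕ => μ).map (empShift n m) = empKernel (Fin m) μ := by
  have hinj : (fun i : Fin m => (i : ℕ) + n).Injective :=
    (add_left_injective n).comp Fin.val_injective
  rw [empKernel_apply, ← map_infinitePi_subsequence hinj,
    Measure.map_map measurable_empMeasure (by fun_prop)]
  exact congrArg (Measure.map · _) (funext (empShift_eq_empMeasure n m))

variable [Nonempty S] {iid : Measure S → Measure (ℕ → S)}
  {ρ : Measure (ℕ → S)} [IsFiniteMeasure ρ] {θ : (ℕ → S) → Measure S}

lemma hasCondDistrib_disjoint_subsequences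
    (hiid : ∀ μ : Measure S, [IsProbabilityMeasure μ] → iid μ = .infinitePi fun _ => μ)
    (hθ : Measurable θ) (hθ_prob : ∀ᵐ ω ∂ρ, IsProbabilityMeasure (θ ω))
    (hρ : ∀ C : Set (ℕ → S), MeasurableSet C → ∀ B : Set (Measure S), MeasurableSet B →
      ρ (C ∩ θ ⁻¹' B) = ∫⁻ ω in θ ⁻¹' B, iid (θ ω) C ∂ρ)
    (hfg : (Sum.elim f g).Injective) :
    HasCondDistrib (fun ω => (fun i => ω (f i), fun j => ω (g j))) θ
      (iidKernel ι ×ₖ iidKernel κ) ρ := by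
  have hmeas : Measurable fun ω : ℕ → S => (fun i => ω (f i), fun j => ω (g j)) := by fun_prop
  refine hasCondDistrib_of_measure_inter_preimage hθ hmeas fun B hB C hC => ?_
  rw [Set.inter_comm, hρ _ (hmeas hC) B hB]
  refine lintegral_congr_ae (ae_restrict_of_ae (hθ_prob.mono fun ω _ => ?_))
  dsimp only
  rw [hiid, ← Measure.map_apply hmeas hC, map_infinitePi_disjoint_subsequences hfg,
    Kernel.prod_apply, iidKernel_apply, iidKernel_apply]

end IIDSequence

theorem predictive_le_posterior_general
    {S : Type*} [MetricSpace S] [TopologicalSpace.SeparableSpace S]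
    [MeasurableSpace S] [BorelSpace S]
    (iid : Measure S → Measure (ℕ → S))
    (hiid : ∀ 𝔭 : Measure S, IsProbabilityMeasure 𝔭 →
      ∀ (n : ℕ) (A : Fin n → Set S), (∀ i, MeasurableSet (A i)) →
        iid 𝔭 {ω | ∀ i : Fin n, ω (i : ℕ) ∈ A i} = ∏ i, 𝔭 (A i))
    (ρ : Measure (ℕ → S)) [IsProbabilityMeasure ρ]
    (ptilde : (ℕ → S) → Measure S) (hptilde_meas : Measurable ptilde)
    (hdirect : ∀ C : Set (ℕ → S), MeasurableSet C → ∀ B : Set (Measure S), MeasurableSet B →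
      ρ (C ∩ ptilde ⁻¹' B) = ∫⁻ ω in ptilde ⁻¹' B, iid (ptilde ω) C ∂ρ)
    (p : ℝ) (hp : 1 ≤ p) (hptildeWp : ∀ᵐ ω ∂ρ, MemWp p (ptilde ω))
    (n m : ℕ) (hm : 1 ≤ m)
    (phat : (Fin n → S) → Measure S)
    (hphatWp : ∀ᵐ ω ∂ρ, MemWp p (phat fun i : Fin n => ω (i : ℕ)))
    (post : (Fin n → S) → Measure (Measure S)) (hpost_prob : ∀ v, IsProbabilityMeasure (post v))
    (hpost_meas : Measurable post)
    (hpost : ∀ A : Set (Fin n → S), MeasurableSet A → ∀ B : Set (Measure S), MeasurableSet B →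
      ρ {ω | (fun i : Fin n => ω (i : ℕ)) ∈ A ∧ ptilde ω ∈ B}
        = ∫⁻ ω in {ω | (fun i : Fin n => ω (i : ℕ)) ∈ A}, post (fun i : Fin n => ω (i : ℕ)) B ∂ρ)
    (qm : (Fin n → S) → Measure (Measure S)) (hqm_prob : ∀ v, IsProbabilityMeasure (qm v))
    (hqm_meas : Measurable qm)
    (hqm : ∀ A : Set (Fin n → S), MeasurableSet A → ∀ B : Set (Measure S), MeasurableSet B →
      ρ {ω | (fun i : Fin n => ω (i : ℕ)) ∈ A ∧ empShift n m ω ∈ B}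
        = ∫⁻ ω in {ω | (fun i : Fin n => ω (i : ℕ)) ∈ A}, qm (fun i : Fin n => ω (i : ℕ)) B ∂ρ) :
    ∀ᵐ ω ∂ρ,
      wassW (fun μ ν => wassW (fun u v => dist u v) p μ ν) p
          (qm fun i : Fin n => ω (i : ℕ))
          ((iid (phat fun i : Fin n => ω (i : ℕ))).map (empShift n m))
        ≤ wassW (fun μ ν => wassW (fun u v => dist u v) p μ ν) p
            (post fun i : Fin n => ω (i : ℕ))
            (Measure.dirac (phat fun i : Fin n => ω (i : ℕ))) := by
  have : SecondCountableTopology S := UniformSpace.secondCountable_of_separable S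
  have : Nonempty S := (nonempty_of_isProbabilityMeasure ρ).map (· 0)
  have : Nonempty (Fin m) := ⟨⟨0, hm⟩⟩
  have hiid' (μ : Measure S) [hμ : IsProbabilityMeasure μ] : iid μ = .infinitePi fun _ => μ :=
    eq_infinitePi_of_initial_cylinders (hiid μ hμ)
  have hdisj : (Sum.elim (fun i : Fin n => (i : ℕ)) fun j : Fin m => j + n).Injective :=
    Fin.val_injective.sumElim ((add_left_injective n).comp Fin.val_injective) fun i j => by lia
  let π : Kernel (Fin n → S) (Measure S) := ⟨post, hpost_meas⟩
  let q : Kernel (Fin n → S) (Measure S) := ⟨qm, hqm_meas⟩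
  have : IsMarkovKernel π := ⟨hpost_prob⟩
  have : IsMarkovKernel q := ⟨hqm_prob⟩
  have hX : Measurable fun (ω : ℕ → S) (i : Fin n) => ω i := by fun_prop
  have hsample := hasCondDistrib_disjoint_subsequences hiid' hptilde_meas
    (hptildeWp.mono fun _ h => h.1) hdirect hdisj
  have hposterior : HasCondDistrib ptilde (fun ω (i : Fin n) => ω i) π ρ :=
    hasCondDistrib_of_measure_inter_preimage hX hptilde_meas hpost
  have hpredictive : HasCondDistrib (empShift n m) (fun ω (i : Fin n) => ω i) q ρ :=
    hasCondDistrib_of_measure_inter_preimage hX (measurable_empShift n m) hqm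
  rw [funext (empShift_eq_empMeasure n m)] at hpredictive
  filter_upwards [hphatWp, ae_wassW_posteriorPredictive_le hp hptildeWp hsample hposterior
    hpredictive hphatWp] with ω hWp hle
  have := hWp.1
  rwa [hiid', map_infinitePi_empShift]

/-- with `ρ`-probability one,
`d^{(p)}_{[[S]_p]}( q_m(ξ^{(n)}), p̂_n^∞ ∘ ẽ_{n,m}⁻¹ ) ≤ d^{(p)}_{[[S]_p]}( π(ξ^{(n)}), δ_{p̂_n} )`. -/
theorem predictive_le_posterior
    {S : Type*} [MetricSpace S] [TopologicalSpace.SeparableSpace S]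
    [MeasurableSpace S] [BorelSpace S]
    (hRadon : ∀ μ : Measure S, IsProbabilityMeasure μ → μ.InnerRegular)
    (iid : Measure S → Measure (ℕ → S))
    (hiid : ∀ 𝔭 : Measure S, IsProbabilityMeasure 𝔭 →
      IsProbabilityMeasure (iid 𝔭) ∧
        ∀ (n : ℕ) (A : Fin n → Set S), (∀ i, MeasurableSet (A i)) →
          iid 𝔭 {ω | ∀ i : Fin n, ω (i : ℕ) ∈ A i} = ∏ i, 𝔭 (A i))
    (ρ : Measure (ℕ → S)) [IsProbabilityMeasure ρ]
    (hexch : ∀ σ : Equiv.Perm ℕ, ρ.map (fun ω => ω ∘ σ) = ρ)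
    (ptilde : (ℕ → S) → Measure S) (hptilde_meas : Measurable ptilde)
    (hptilde_prob : ∀ᵐ ω ∂ρ, IsProbabilityMeasure (ptilde ω))
    (hdirect : ∀ C : Set (ℕ → S), MeasurableSet C → ∀ B : Set (Measure S), MeasurableSet B →
      ρ (C ∩ ptilde ⁻¹' B) = ∫⁻ ω in ptilde ⁻¹' B, iid (ptilde ω) C ∂ρ)
    (p : ℝ) (hp : 1 ≤ p)
    (phat : (n : ℕ) → (Fin n → S) → Measure S)
    (hphat_meas : ∀ n, Measurable (phat n))
    (hphatWp : ∀ n v, MemWp p (phat n v))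
    (hptildeWp : ∀ᵐ ω ∂ρ, MemWp p (ptilde ω))
    -- the posterior distributions `π(ξ^{(n)})`
    (post : (n : ℕ) → (Fin n → S) → Measure (Measure S))
    (hpost_prob : ∀ n v, IsProbabilityMeasure (post n v))
    (hpost_meas : ∀ n, Measurable (post n))
    (hpost : ∀ (n : ℕ) (A : Set (Fin n → S)), MeasurableSet A →
      ∀ B : Set (Measure S), MeasurableSet B →
        ρ {ω | (fun i : Fin n => ω (i : ℕ)) ∈ A ∧ ptilde ω ∈ B}
          = ∫⁻ ω in {ω | (fun i : Fin n => ω (i : ℕ)) ∈ A},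
              post n (fun i : Fin n => ω (i : ℕ)) B ∂ρ)
    -- the conditional distributions `q_m(ξ^{(n)})` of `ẽ_{n,m}` given `ξ^{(n)}`
    (qm : (m n : ℕ) → (Fin n → S) → Measure (Measure S))
    (hqm_prob : ∀ m n v, IsProbabilityMeasure (qm m n v))
    (hqm_meas : ∀ m n, Measurable (qm m n))
    (hqm : ∀ (m n : ℕ) (A : Set (Fin n → S)), MeasurableSet A →
      ∀ B : Set (Measure S), MeasurableSet B →
        ρ {ω | (fun i : Fin n => ω (i : ℕ)) ∈ A ∧ empShift n m ω ∈ B}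
          = ∫⁻ ω in {ω | (fun i : Fin n => ω (i : ℕ)) ∈ A},
              qm m n (fun i : Fin n => ω (i : ℕ)) B ∂ρ) :
    ∀ (m : ℕ), 1 ≤ m → ∀ n : ℕ,
      ∀ᵐ ω ∂ρ,
        wassW (fun μ ν => wassW (fun u v => dist u v) p μ ν) p
            (qm m n (fun i : Fin n => ω (i : ℕ)))
            ((iid (phat n (fun i : Fin n => ω (i : ℕ)))).map (empShift n m))
          ≤ wassW (fun μ ν => wassW (fun u v => dist u v) p μ ν) p
              (post n (fun i : Fin n => ω (i : ℕ)))
              (Measure.dirac (phat n (fun i : Fin n => ω (i : ℕ)))) := by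
  exact fun m hm n => predictive_le_posterior_general iid (fun 𝔭 h𝔭 => (hiid 𝔭 h𝔭).2) ρ ptilde
    hptilde_meas hdirect p hp hptildeWp n m hm (phat n) (.of_forall fun _ => hphatWp n _) (post n)
    (hpost_prob n) (hpost_meas n) (hpost n) (qm m n) (hqm_prob m n) (hqm_meas m n) (hqm m n)

end
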